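/- arXiv:2505.21159 — 12 statements merged into one kernel-verified Lean document; each statement's English description precedes it below -/
import Mathlib

section
/- Let s₀ be a segment, p ∈ ℙ_{s₀} an MY path for s₀, and (s₁, …, s_l) a ladder. Then at most one index k ∈ {1, …, l} satisfies s_k ∈ c_p^+, and at most one index k satisfies s_k ∈ c_p^−. -/
namespace SnakePaper

/-- `zle a b` : `b - a` is a nonnegative integer (the integrality order `a ≤ b`). -/
def zle (a b : ℚ) : Prop := ∃ n : ℤ, 0 ≤ n ∧ b - a = (n : ℚ)

/-- `zlt a b` : `b - a` is a positive integer (the integrality order `a < b`). -/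
def zlt (a b : ℚ) : Prop := ∃ n : ℤ, 0 < n ∧ b - a = (n : ℚ)

/-- `s = (i, j)` is an `N`-segment: `2i ∈ ℤ`, `j - i ∈ ℤ` and `0 ≤ j - i ≤ N + 1`. -/
def IsSeg (N : ℕ) (s : ℚ × ℚ) : Prop :=
  (∃ m : ℤ, 2 * s.1 = (m : ℚ)) ∧
  ∃ n : ℤ, s.2 - s.1 = (n : ℚ) ∧ 0 ≤ n ∧ (n : ℚ) ≤ (N : ℚ) + 1

/-- `s = (i, j)` is a proper `N`-segment: `2i ∈ ℤ`, `j - i ∈ ℤ` and `0 < j - i < N + 1`. -/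
def IsProperSeg (N : ℕ) (s : ℚ × ℚ) : Prop :=
  (∃ m : ℤ, 2 * s.1 = (m : ℚ)) ∧
  ∃ n : ℤ, s.2 - s.1 = (n : ℚ) ∧ 0 < n ∧ (n : ℚ) < (N : ℚ) + 1

/-- `supp [i,j] = j - i`. -/
def supp (s : ℚ × ℚ) : ℚ := s.2 - s.1

/-- `spar [i,j] = i + j`. -/
def spar (s : ℚ × ℚ) : ℚ := s.1 + s.2

/-- Right dual `s* = [j - h, i]`, where `h = N + 1`. -/
def dual (N : ℕ) (s : ℚ × ℚ) : ℚ × ℚ := (s.2 - ((N : ℚ) + 1), s.1)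

/-- Left dual `*s = [j, i + h]`, where `h = N + 1`. -/
def ldual (N : ℕ) (s : ℚ × ℚ) : ℚ × ℚ := (s.2, s.1 + ((N : ℚ) + 1))

/-- `1 + s = [i + 1, j + 1]`. -/
def shift (s : ℚ × ℚ) : ℚ × ℚ := (s.1 + 1, s.2 + 1)

/-- `Covers N s₂ s₁` : `s₂ ▷ s₁`, i.e. `i₁ < i₂ ≤ j₁ < j₂ ≤ h + i₁` (integrality order). -/
def Covers (N : ℕ) (s₂ s₁ : ℚ × ℚ) : Prop :=
  zlt s₁.1 s₂.1 ∧ zle s₂.1 s₁.2 ∧ zlt s₁.2 s₂.2 ∧ zle s₂.2 (((N : ℚ) + 1) + s₁.1)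

/-- For `s₂ ▷ s₁`, the intersection `s₁ ∩ s₂ = [i₂, j₁]`. -/
def seginter (s₁ s₂ : ℚ × ℚ) : ℚ × ℚ := (s₂.1, s₁.2)

/-- For `s₂ ▷ s₁`, the union `s₁ ∪ s₂ = [i₁, j₂]`. -/
def segunion (s₁ s₂ : ℚ × ℚ) : ℚ × ℚ := (s₁.1, s₂.2)

/-- `(s 0, …, s (l-1))` is a ladder of length `l`. -/
def IsLadder (N l : ℕ) (s : ℕ → ℚ × ℚ) : Prop :=
  (∀ k, k < l → IsSeg N (s k)) ∧
  ∀ k m, k < m → m < l → zlt (s k).1 (s m).1 ∧ zlt (s k).2 (s m).2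

/-- `(s₁, s₂)` is a ladder of length 2. -/
def IsLadder2 (N : ℕ) (s₁ s₂ : ℚ × ℚ) : Prop :=
  IsSeg N s₁ ∧ IsSeg N s₂ ∧ zlt s₁.1 s₂.1 ∧ zlt s₁.2 s₂.2

/-- Componentwise covering of two length-`l` tuples: `𝐬 ▷ 𝐬'`. -/
def CoversMulti (N l : ℕ) (s s' : ℕ → ℚ × ℚ) : Prop :=
  ∀ m, m < l → Covers N (s m) (s' m)

/-- `𝐬 ▷_p 𝐬'` for length-`l` tuples: `𝐬(0, l−k) ▷ 𝐬'(k, l)` for all `0 ≤ k ≤ p`. -/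
def CoversP (N l p : ℕ) (s s' : ℕ → ℚ × ℚ) : Prop :=
  ∀ k, k ≤ p → ∀ m, m + k < l → Covers N (s m) (s' (m + k))

/-- `p` is an MY path for the segment `s` (`h = N + 1`; only values on `{0, …, h}` matter). -/
def IsMYPath (N : ℕ) (s : ℚ × ℚ) (p : ℕ → ℤ) : Prop :=
  (∀ k, k < N + 1 → p (k + 1) = p k + 1 ∨ p (k + 1) = p k - 1) ∧
  (p 0 : ℚ) = 2 * s.2 ∧ (p (N + 1) : ℚ) = ((N : ℚ) + 1) + 2 * s.1

/-- `s_{p,k} = [(p(k) - k)/2, (p(k) + k)/2]`. -/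
def pathSeg (p : ℕ → ℤ) (k : ℕ) : ℚ × ℚ :=
  (((p k : ℚ) - (k : ℚ)) / 2, ((p k : ℚ) + (k : ℚ)) / 2)

/-- `c_p^-` : segments at the local maxima of `p` in `[1, N]`. -/
def cMinus (N : ℕ) (p : ℕ → ℤ) : Set (ℚ × ℚ) :=
  {t | ∃ k, 1 ≤ k ∧ k ≤ N ∧ t = pathSeg p k ∧ p (k - 1) = p k - 1 ∧ p (k + 1) = p k - 1}

/-- `c_p^+` : segments at the local minima of `p` in `[1, N]`. -/
def cPlus (N : ℕ) (p : ℕ → ℤ) : Set (ℚ × ℚ) :=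
  {t | ∃ k, 1 ≤ k ∧ k ≤ N ∧ t = pathSeg p k ∧ p (k - 1) = p k + 1 ∧ p (k + 1) = p k + 1}

/-- `c_s^- = ⋃_{p ∈ ℙ_s} c_p^-`. -/
def cSegMinus (N : ℕ) (s : ℚ × ℚ) : Set (ℚ × ℚ) :=
  {t | ∃ p, IsMYPath N s p ∧ t ∈ cMinus N p}

/-- `c_s^+ = ⋃_{p ∈ ℙ_s} c_p^+`. -/
def cSegPlus (N : ℕ) (s : ℚ × ℚ) : Set (ℚ × ℚ) :=
  {t | ∃ p, IsMYPath N s p ∧ t ∈ cPlus N p}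

/-- `(p 0, …, p (l-1)) ∈ ℙ_𝐬` for the length-`l` tuple `𝐬`. -/
def IsPathTuple (N l : ℕ) (s : ℕ → ℚ × ℚ) (p : ℕ → ℕ → ℤ) : Prop :=
  (∀ m, m < l → IsMYPath N (s m) (p m)) ∧
  ∀ m n, m < n → n < l → ∀ k, k ≤ N + 1 → p m k < p n k

/-- The highest path `p_s(k) = spar(s) + |k - supp(s)|` (rational-valued formula). -/
def highestPath (s : ℚ × ℚ) (k : ℚ) : ℚ := spar s + |k - supp s|

/-- The lowest path `p_s^*(k) = spar(s) + h - |k - (h - supp(s))|` (rational-valued formula). -/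
def lowestPath (N : ℕ) (s : ℚ × ℚ) (k : ℚ) : ℚ :=
  spar s + ((N : ℚ) + 1) - |k - (((N : ℚ) + 1) - supp s)|

/-- `Small N s₁' t` : `spar(t) ≤ spar(*s₁') - |supp(t) - supp(*s₁')|` (integrality order). -/
def Small (N : ℕ) (s₁' t : ℚ × ℚ) : Prop :=
  zle (spar t) (spar (ldual N s₁') - |supp t - supp (ldual N s₁')|)

/-- `(s₁, s₂)` and `(s₁', s₂')` are ladders and `(s₁, s₂) ▷₁ (s₁', s₂')`. -/
def Pair1Cover (N : ℕ) (s₁ s₁' s₂ s₂' : ℚ × ℚ) : Prop :=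
  IsLadder2 N s₁ s₂ ∧ IsLadder2 N s₁' s₂' ∧
  Covers N s₁ s₁' ∧ Covers N s₂ s₂' ∧ Covers N s₁ s₂'

/-- Paths are 1-Lipschitz. -/
theorem path_lip (N : ℕ) (p : ℕ → ℤ)
    (hp : ∀ k, k < N + 1 → p (k + 1) = p k + 1 ∨ p (k + 1) = p k - 1) (a d : ℕ)
    (h : a + d ≤ N + 1) : p (a + d) ≤ p a + d ∧ p a ≤ p (a + d) + d := by
  induction d with
  | zero => simp
  | succ d ih =>
    have h1 := ih (by omega)
    have h2 := hp (a + d) (by omega)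
    rw [← add_assoc]
    push_cast
    omega

/-- Two points of one path are never strictly comparable in the ladder order. -/
theorem path_not_ladder (N : ℕ) (p : ℕ → ℤ)
    (hp : ∀ k, k < N + 1 → p (k + 1) = p k + 1 ∨ p (k + 1) = p k - 1) (a b : ℕ)
    (ha : a ≤ N) (hb : b ≤ N) (h1 : zlt (pathSeg p a).1 (pathSeg p b).1)
    (h2 : zlt (pathSeg p a).2 (pathSeg p b).2) : False := by
  obtain ⟨n, hn, e1⟩ := h1
  obtain ⟨m, hm, e2⟩ := h2
  simp only [pathSeg] at e1 e2
  have f1 : p b - b - (p a - a) = 2 * n := by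
    have : (p b - b - (p a - a) : ℚ) = 2 * n := by linarith
    exact_mod_cast this
  have f2 : p b + b - (p a + a) = 2 * m := by
    have : (p b + b - (p a + a) : ℚ) = 2 * m := by linarith
    exact_mod_cast this
  rcases le_total a b with h | h
  · obtain ⟨d, rfl⟩ := Nat.exists_eq_add_of_le h
    have := path_lip N p hp a d (by omega)
    push_cast at f1 f2
    omega
  · obtain ⟨d, rfl⟩ := Nat.exists_eq_add_of_le h
    have := path_lip N p hp b d (by omega)
    push_cast at f1 f2
    omega

/-- Two entries of a ladder lying on the same path coincide. -/
theorem ladder_path_unique (N : ℕ) (p : ℕ → ℤ)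
    (hp : ∀ k, k < N + 1 → p (k + 1) = p k + 1 ∨ p (k + 1) = p k - 1) (l : ℕ)
    (s : ℕ → ℚ × ℚ) (hlad : IsLadder N l s) (k m a b : ℕ) (hk : k < l) (hm : m < l)
    (ha : a ≤ N) (hb : b ≤ N) (ea : s k = pathSeg p a) (eb : s m = pathSeg p b) : k = m := by
  rcases lt_trichotomy k m with h | h | h
  · have := hlad.2 k m h hm
    rw [ea, eb] at this
    exact (path_not_ladder N p hp a b ha hb this.1 this.2).elim
  · exact h
  · have := hlad.2 m k h hk
    rw [ea, eb] at this
    exact (path_not_ladder N p hp b a hb ha this.1 this.2).elim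

/-- If `p` is an MY path for a segment `s₀` and `(s₁, …, s_l)` is a ladder, then at most
one entry of the ladder lies in `c_p^+`, and at most one lies in `c_p^-`. -/
theorem ladder_at_most_one_corner (N : ℕ) (hN : 1 ≤ N) (s₀ : ℚ × ℚ) (hs₀ : IsSeg N s₀)
    (p : ℕ → ℤ) (hp : IsMYPath N s₀ p) (l : ℕ) (s : ℕ → ℚ × ℚ)
    (hlad : IsLadder N l s) :
    (∀ k m, k < l → m < l → s k ∈ cPlus N p → s m ∈ cPlus N p → k = m) ∧
    (∀ k m, k < l → m < l → s k ∈ cMinus N p → s m ∈ cMinus N p → k = m) := by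
  constructor
  · rintro k m hk hm ⟨a, _, ha, ea, _⟩ ⟨b, _, hb, eb, _⟩
    exact ladder_path_unique N p hp.1 l s hlad k m a b hk hm ha hb ea eb
  · rintro k m hk hm ⟨a, _, ha, ea, _⟩ ⟨b, _, hb, eb, _⟩
    exact ladder_path_unique N p hp.1 l s hlad k m a b hk hm ha hb ea eb

end SnakePaper
end

section
/- Let s₀ be a segment, p ∈ ℙ_{s₀} an MY path for s₀, and let s be a segment with s ∉ c_p. If p(supp(s)) ≤ spar(s), p(supp(s)) − supp(s) < p(0), and p(supp(s)) − (h − supp(s)) < p(h), then there exists a segment s' ∈ c_p^+ with spar(s') < spar(s). -/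
namespace SnakePaper

theorem right_min (N : ℕ) (p : ℕ → ℤ)
    (hp : ∀ k, k < N + 1 → p (k + 1) = p k + 1 ∨ p (k + 1) = p k - 1)
    (n : ℕ) (hn : n ≤ N) (hd : p (n + 1) = p n - 1)
    (h : p n - ((N : ℤ) + 1 - n) < p (N + 1)) :
    ∃ k, 1 ≤ k ∧ k ≤ N ∧ p (k - 1) = p k + 1 ∧ p (k + 1) = p k + 1 ∧ p k < p n := by
  by_contra hc
  push Not at hc
  have key : ∀ d : ℕ, n + d ≤ N →
      p (n + d + 1) = p (n + d) - 1 ∧ p (n + d) = p n - d := by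
    intro d
    induction d with
    | zero => intro _; simpa using hd
    | succ d ih =>
      intro hN
      obtain ⟨a, b⟩ := ih (by omega)
      have c : p (n + (d + 1)) = p (n + d) - 1 := a
      have e := hc (n + (d + 1)) (by omega) hN
        (by rw [show n + (d + 1) - 1 = n + d by omega]; omega)
      refine ⟨?_, by push_cast; omega⟩
      rcases hp (n + (d + 1)) (by omega) with h | h
      · have := e h
        omega
      · exact h
  obtain ⟨a, b⟩ := key (N - n) (by omega)
  rw [show n + (N - n) = N by omega] at a b
  omega

theorem left_min (N : ℕ) (p : ℕ → ℤ)
    (hp : ∀ k, k < N + 1 → p (k + 1) = p k + 1 ∨ p (k + 1) = p k - 1)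
    (n : ℕ) (hn1 : 1 ≤ n) (hn : n ≤ N) (hd : p (n - 1) = p n - 1)
    (h : p n - n < p 0) :
    ∃ k, 1 ≤ k ∧ k ≤ N ∧ p (k - 1) = p k + 1 ∧ p (k + 1) = p k + 1 ∧ p k < p n := by
  by_contra hc
  push Not at hc
  have key : ∀ d m : ℕ, m + 1 + d = n →
      p m = p (m + 1) - 1 ∧ p m = p n - d - 1 := by
    intro d
    induction d with
    | zero =>
      intro m hm
      subst hm
      simp at hd ⊢
      omega
    | succ d ih =>
      intro m hm
      obtain ⟨a, b⟩ := ih (m + 1) (by omega)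
      have e := hc (m + 1) (by omega) (by omega)
      rw [show m + 1 - 1 = m by omega] at e
      have f : p m = p (m + 1) - 1 := by
        rcases hp m (by omega) with h | h
        · omega
        · have := e (by omega) (by omega)
          omega
      refine ⟨f, by push_cast; omega⟩
  obtain ⟨a, b⟩ := key (n - 1) 0 (by omega)
  omega

/-- If `p` is an MY path for `s₀`, `s` is a segment not in `c_p = c_p^+ ∪ c_p^-`,
`p(supp(s)) ≤ spar(s)`, `p(supp(s)) − supp(s) < p(0)` and
`p(supp(s)) − (h − supp(s)) < p(h)`, then there is `s' ∈ c_p^+` with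
`spar(s') < spar(s)`. -/
theorem exists_smaller_min (N : ℕ) (hN : 1 ≤ N) (s₀ : ℚ × ℚ) (hs₀ : IsSeg N s₀)
    (p : ℕ → ℤ) (hp : IsMYPath N s₀ p) (s : ℚ × ℚ) (hs : IsSeg N s)
    (hnot : s ∉ cPlus N p ∪ cMinus N p)
    (n : ℕ) (hn : (n : ℚ) = supp s)
    (h1 : (p n : ℚ) ≤ spar s)
    (h2 : (p n : ℚ) - supp s < (p 0 : ℚ))
    (h3 : (p n : ℚ) - (((N : ℚ) + 1) - supp s) < (p (N + 1) : ℚ)) :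
    ∃ s' ∈ cPlus N p, spar s' < spar s := by
  obtain ⟨hp, -, -⟩ := hp
  obtain ⟨-, m, hm, hm0, hm1⟩ := hs
  have hmn : (n : ℚ) = m := by rw [hn]; exact hm
  have hnN : n ≤ N + 1 := by
    have : (n : ℚ) ≤ (N : ℚ) + 1 := by rw [hmn]; exact hm1
    exact_mod_cast this
  rw [← hn] at h2 h3
  have h2' : p n - n < p 0 := by exact_mod_cast h2
  have h3' : p n - ((N : ℤ) + 1 - n) < p (N + 1) := by exact_mod_cast h3
  have n0 : 1 ≤ n := by
    rcases Nat.eq_zero_or_pos n with h | h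
    · subst h; simp at h2'
    · exact h
  have nN : n ≤ N := by
    rcases Nat.lt_or_ge N n with h | h
    · obtain rfl : n = N + 1 := by omega
      push_cast at h3'
      omega
    · exact h
  have fin : (∃ k, 1 ≤ k ∧ k ≤ N ∧ p (k - 1) = p k + 1 ∧ p (k + 1) = p k + 1 ∧
      (p k : ℚ) < spar s) → ∃ s' ∈ cPlus N p, spar s' < spar s := by
    rintro ⟨k, k1, k2, k3, k4, k5⟩
    refine ⟨pathSeg p k, ⟨k, k1, k2, rfl, k3, k4⟩, ?_⟩
    have : spar (pathSeg p k) = p k := by simp only [spar, pathSeg]; ring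
    rw [this]; exact k5
  have fin' : (∃ k, 1 ≤ k ∧ k ≤ N ∧ p (k - 1) = p k + 1 ∧ p (k + 1) = p k + 1 ∧
      p k < p n) → ∃ s' ∈ cPlus N p, spar s' < spar s := by
    rintro ⟨k, k1, k2, k3, k4, k5⟩
    refine fin ⟨k, k1, k2, k3, k4, lt_of_lt_of_le ?_ h1⟩
    exact_mod_cast k5
  rcases hp n (by omega) with hr | hr
  · have hl := hp (n - 1) (by omega)
    rw [show n - 1 + 1 = n by omega] at hl
    rcases hl with hl | hl
    · exact fin' (left_min N p hp n n0 nN (by omega) h2')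
    · rcases lt_or_eq_of_le h1 with h | h
      · exact fin ⟨n, n0, nN, by omega, hr, h⟩
      · exfalso
        apply hnot
        left
        refine ⟨n, n0, nN, ?_, by omega, hr⟩
        simp only [supp, spar] at hn h
        ext
        · simp only [pathSeg]; linarith
        · simp only [pathSeg]; linarith
  · exact fin' (right_min N p hp n nN hr h3')

end SnakePaper
end

section
/- For segments s₁ and s₂, one has s₁ ∈ c_{s₂}^− if and only if s₁ ▷ s₂; that is, there exists an MY path p ∈ ℙ_{s₂} with s₁ ∈ c_p^− if and only if s₂ = [i₂, j₂], s₁ = [i₁, j₁] satisfy i₂ < i₁ ≤ j₂ < j₁ ≤ h + i₂. -/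
namespace SnakePaper

theorem path_ups (N : ℕ) (p : ℕ → ℤ)
    (hp : ∀ k, k < N + 1 → p (k + 1) = p k + 1 ∨ p (k + 1) = p k - 1) (a n : ℕ)
    (h : a + n ≤ N + 1) : ∃ u : ℤ, 0 ≤ u ∧ u ≤ n ∧ p (a + n) = p a + 2 * u - n := by
  induction n with
  | zero => exact ⟨0, by simp⟩
  | succ n ih =>
    obtain ⟨u, h0, h1, h2⟩ := ih (by omega)
    rcases hp (a + n) (by omega) with h3 | h3
    · refine ⟨u + 1, by omega, by push_cast; omega, ?_⟩
      rw [← add_assoc, h3, h2]; push_cast; ring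
    · refine ⟨u, by omega, by push_cast; omega, ?_⟩
      rw [← add_assoc, h3, h2]; push_cast; ring

/-- For segments `s₁, s₂`: `s₁ ∈ c_{s₂}^-` if and only if `s₁ ▷ s₂`. -/
theorem mem_cSegMinus_iff_covers (N : ℕ) (hN : 1 ≤ N) (s₁ s₂ : ℚ × ℚ)
    (h₁ : IsSeg N s₁) (h₂ : IsSeg N s₂) :
    s₁ ∈ cSegMinus N s₂ ↔ Covers N s₁ s₂ := by
  constructor
  · rintro ⟨p, ⟨hp, hp0, hpN⟩, k, hk1, hkN, rfl, hm, hq⟩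
    obtain ⟨u, hu0, hu1, hu⟩ := path_ups N p hp 0 (k - 1) (by omega)
    obtain ⟨v, hv0, hv1, hv⟩ := path_ups N p hp (k + 1) (N - k) (by omega)
    have e2 : k + 1 + (N - k) = N + 1 := by omega
    rw [zero_add] at hu
    rw [e2] at hv
    push_cast [Nat.cast_sub hk1, Nat.cast_sub hkN] at hu hv hu1 hv1
    have hA : (p k : ℚ) = p 0 + 2 * u - k + 2 := by
      have : p k = p 0 + 2 * u - k + 2 := by omega
      exact_mod_cast this
    have hB : (p (N + 1) : ℚ) = p k - 1 + 2 * v - (N - k) := by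
      have : p (N + 1) = p k - 1 + 2 * v - (N - k) := by omega
      exact_mod_cast this
    refine ⟨⟨N - k - v + 1, by omega, ?_⟩, ⟨k - 1 - u, by omega, ?_⟩,
      ⟨u + 1, by omega, ?_⟩, ⟨v, by omega, ?_⟩⟩ <;>
    · simp only [pathSeg]
      push_cast
      linarith
  · rintro ⟨⟨a, ha, ea⟩, ⟨b, hb, eb⟩, ⟨c, hc, ec⟩, ⟨d, hd, ed⟩⟩
    obtain ⟨⟨M, hM⟩, -⟩ := h₂
    have hs : a + b + c + d = N + 1 := by
      have : (a + b + c + d : ℚ) = N + 1 := by linarith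
      exact_mod_cast this
    obtain ⟨a, rfl⟩ := Int.eq_ofNat_of_zero_le (show 0 ≤ a by omega)
    obtain ⟨b, rfl⟩ := Int.eq_ofNat_of_zero_le (show 0 ≤ b by omega)
    obtain ⟨c, rfl⟩ := Int.eq_ofNat_of_zero_le (show 0 ≤ c by omega)
    push_cast at ea eb ec
    let p : ℕ → ℤ := fun m =>
      if m ≤ b then M + 2 * a + 2 * b - m
      else if m ≤ b + c then M + 2 * a + m
      else if m ≤ b + c + a then M + 2 * a + 2 * b + 2 * c - m
      else M + m
    have hpd : ∀ m, p m = if m ≤ b then M + 2 * a + 2 * b - m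
      else if m ≤ b + c then M + 2 * a + m
      else if m ≤ b + c + a then M + 2 * a + 2 * b + 2 * c - m
      else M + m := fun m => rfl
    have hk : p (b + c) = M + 2 * a + b + c := by
      rw [hpd]; split_ifs <;> push_cast <;> omega
    refine ⟨p, ⟨?_, ?_, ?_⟩, b + c, by omega, by omega, ?_, ?_, ?_⟩
    · intro k hk
      rw [hpd, hpd]
      split_ifs <;> push_cast <;> omega
    · have : p 0 = M + 2 * a + 2 * b := by
        rw [hpd]; simp
      rw [this]; push_cast; linarith
    · have : p (N + 1) = M + N + 1 := by
        rw [hpd]; split_ifs <;> push_cast <;> omega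
      rw [this]; push_cast; linarith
    · unfold pathSeg
      rw [hk]
      ext <;> simp only [] <;> push_cast <;> linarith
    · rw [hk, hpd]; split_ifs <;> omega
    · rw [hk, hpd]; split_ifs <;> push_cast <;> omega

end SnakePaper
end

section
/- Let s = [i, j] be a segment. Then c_s^+ equals the set of all segments [m, n] with i ≤ m < j ≤ n < h + i, and c_s^− equals the set of all segments [m, n] with i < m ≤ j < n ≤ h + i (all inequalities with the integrality convention). -/
namespace SnakePaper

/-- Decomposition of a piece of a path into numbers of up and down steps. -/
theorem path_steps (N : ℕ) (p : ℕ → ℤ)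
    (hp : ∀ k, k < N + 1 → p (k + 1) = p k + 1 ∨ p (k + 1) = p k - 1) (a : ℕ) :
    ∀ l : ℕ, a + l ≤ N + 1 →
      ∃ u d : ℤ, 0 ≤ u ∧ 0 ≤ d ∧ u + d = l ∧ p (a + l) = p a + u - d := by
  intro l
  induction l with
  | zero => intro _; exact ⟨0, 0, by simp⟩
  | succ l ih =>
    intro h
    obtain ⟨u, d, hu, hd, h1, h2⟩ := ih (by omega)
    have h3 := hp (a + l) (by omega)
    rw [show a + (l + 1) = a + l + 1 from rfl]
    rcases h3 with h3 | h3
    · exact ⟨u + 1, d, by omega, by omega, by push_cast; omega, by omega⟩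
    · exact ⟨u, d + 1, by omega, by omega, by push_cast; omega, by omega⟩

/-- Step counts on both sides of an interior point `k = l + 1`. -/
theorem path_counts (N : ℕ) (s : ℚ × ℚ) (p : ℕ → ℤ) (hp : IsMYPath N s p) (e : ℤ)
    (l : ℕ) (hl : l + 1 ≤ N) (h1 : p l = p (l + 1) + e) (h2 : p (l + 1 + 1) = p (l + 1) + e) :
    ∃ u d u' d' : ℤ, 0 ≤ u ∧ 0 ≤ d ∧ 0 ≤ u' ∧ 0 ≤ d' ∧
      u + d = l ∧ u' + d' + l + 1 = N ∧
      2 * s.2 = (((p (l + 1) + e - u + d : ℤ)) : ℚ) ∧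
      2 * s.1 = (((p (l + 1) + e + u' - d' - (N + 1) : ℤ)) : ℚ) := by
  obtain ⟨hs, h0, hN⟩ := hp
  obtain ⟨u, d, hu, hd, a1, a2⟩ := path_steps N p hs 0 l (by omega)
  obtain ⟨u', d', hu', hd', b1, b2⟩ := path_steps N p hs (l + 1 + 1) (N - 1 - l) (by omega)
  rw [show l + 1 + 1 + (N - 1 - l) = N + 1 by omega] at b2
  rw [zero_add] at a2
  refine ⟨u, d, u', d', hu, hd, hu', hd', a1, by omega, ?_, ?_⟩
  · rw [← h0]; congr 1; omega
  · have : 2 * s.1 = ((p (N + 1) : ℤ) : ℚ) - (N + 1) := by rw [hN]; ring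
    rw [this, b2, h2]; push_cast; ring

/-- For a segment `s = [i, j]`, `c_s^+` is the set of all segments `[m, n]` with
`i ≤ m < j ≤ n < h + i`, and `c_s^-` is the set of all segments `[m, n]` with
`i < m ≤ j < n ≤ h + i` (integrality order). -/
theorem cSeg_characterization (N : ℕ) (hN : 1 ≤ N) (s : ℚ × ℚ) (hs : IsSeg N s) :
    cSegPlus N s =
      {t : ℚ × ℚ | IsSeg N t ∧ zle s.1 t.1 ∧ zlt t.1 s.2 ∧ zle s.2 t.2 ∧
        zlt t.2 (((N : ℚ) + 1) + s.1)} ∧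
    cSegMinus N s =
      {t : ℚ × ℚ | IsSeg N t ∧ zlt s.1 t.1 ∧ zle t.1 s.2 ∧ zlt s.2 t.2 ∧
        zle t.2 (((N : ℚ) + 1) + s.1)} := by
  constructor
  · ext t
    constructor
    · rintro ⟨p, hp, k, hk1, hk2, rfl, h1, h2⟩
      obtain ⟨l, rfl⟩ : ∃ l, k = l + 1 := ⟨k - 1, by omega⟩
      rw [Nat.add_sub_cancel] at h1
      obtain ⟨u, d, u', d', hu, hd, hu', hd', a1, a2, a3, a4⟩ :=
        path_counts N s p hp (1) l hk2 (by omega) (by omega)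
      have a1q : (u : ℚ) + d = l := by exact_mod_cast a1
      have a2q : (u' : ℚ) + d' + l + 1 = N := by exact_mod_cast a2
      have hlq : (l : ℚ) + 1 ≤ N := by exact_mod_cast hk2
      push_cast at a3 a4
      refine ⟨⟨⟨p (l + 1) - (l + 1), ?_⟩, ⟨l + 1, ?_, by omega, ?_⟩⟩,
        ⟨d', by omega, ?_⟩, ⟨d + 1, by omega, ?_⟩, ⟨u, by omega, ?_⟩, ⟨u' + 1, by omega, ?_⟩⟩ <;>
        (try simp only [pathSeg]) <;> push_cast <;> linarith
    · rintro ⟨-, ⟨d', hd', e1⟩, ⟨d, hd, e2⟩, ⟨u, hu, e3⟩, ⟨u', hu', e4⟩⟩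
      obtain ⟨⟨I, hI⟩, ⟨n, hn, -, -⟩⟩ := hs
      have hsum : u + d + u' + d' = N + 1 := by
        have : (u : ℚ) + d + u' + d' = N + 1 := by linarith
        exact_mod_cast this
      have hn2 : n = d + d' := by
        have : (n : ℚ) = d + d' := by linarith
        exact_mod_cast this
      obtain ⟨k, hk⟩ : ∃ k : ℕ, (k : ℤ) = u + d := ⟨(u + d).toNat, by omega⟩
      have hkq : (k : ℚ) = u + d := by exact_mod_cast hk
      have hsq : (u : ℚ) + d + u' + d' = N + 1 := by exact_mod_cast hsum
      have hnq : (n : ℚ) = d + d' := by exact_mod_cast hn2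
      let p : ℕ → ℤ := fun x => if x ≤ k then I + 2 * n + min (x : ℤ) (2 * u - x)
        else I + 2 * n + u - d + min ((x : ℤ) - k) (2 * u' - ((x : ℤ) - k))
      have hpk : p k = I + 2 * n + u - d := by
        simp only [p]; rw [if_pos le_rfl]; omega
      have hp0 : p 0 = I + 2 * n := by
        simp only [p]; rw [if_pos (by omega)]; omega
      have hpN : p (N + 1) = I + 2 * n + u - d + u' - d' := by
        simp only [p]; rw [if_neg (by omega)]; push_cast; omega
      refine ⟨p, ⟨?_, ?_, ?_⟩, k, by omega, by omega, ?_, ?_, ?_⟩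
      · intro x hx
        simp only [p]
        split_ifs <;> push_cast <;> omega
      · rw [hp0]; push_cast; linarith
      · rw [hpN]; push_cast; linarith
      · ext <;> simp only [pathSeg, hpk] <;> push_cast <;> linarith
      · rw [hpk]; simp only [p]; rw [if_pos (by omega)]; omega
      · rw [hpk]; simp only [p]; rw [if_neg (by omega)]; push_cast; omega
  · ext t
    constructor
    · rintro ⟨p, hp, k, hk1, hk2, rfl, h1, h2⟩
      obtain ⟨l, rfl⟩ : ∃ l, k = l + 1 := ⟨k - 1, by omega⟩
      rw [Nat.add_sub_cancel] at h1
      obtain ⟨u, d, u', d', hu, hd, hu', hd', a1, a2, a3, a4⟩ :=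
        path_counts N s p hp (-1) l hk2 (by omega) (by omega)
      have a1q : (u : ℚ) + d = l := by exact_mod_cast a1
      have a2q : (u' : ℚ) + d' + l + 1 = N := by exact_mod_cast a2
      have hlq : (l : ℚ) + 1 ≤ N := by exact_mod_cast hk2
      push_cast at a3 a4
      refine ⟨⟨⟨p (l + 1) - (l + 1), ?_⟩, ⟨l + 1, ?_, by omega, ?_⟩⟩,
        ⟨d' + 1, by omega, ?_⟩, ⟨d, by omega, ?_⟩, ⟨u + 1, by omega, ?_⟩, ⟨u', by omega, ?_⟩⟩ <;>
        (try simp only [pathSeg]) <;> push_cast <;> linarith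
    · rintro ⟨-, ⟨d', hd', e1⟩, ⟨d, hd, e2⟩, ⟨u, hu, e3⟩, ⟨u', hu', e4⟩⟩
      obtain ⟨⟨I, hI⟩, ⟨n, hn, -, -⟩⟩ := hs
      have hsum : u + d + u' + d' = N + 1 := by
        have : (u : ℚ) + d + u' + d' = N + 1 := by linarith
        exact_mod_cast this
      have hn2 : n = d + d' := by
        have : (n : ℚ) = d + d' := by linarith
        exact_mod_cast this
      obtain ⟨k, hk⟩ : ∃ k : ℕ, (k : ℤ) = u + d := ⟨(u + d).toNat, by omega⟩
      have hkq : (k : ℚ) = u + d := by exact_mod_cast hk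
      have hsq : (u : ℚ) + d + u' + d' = N + 1 := by exact_mod_cast hsum
      have hnq : (n : ℚ) = d + d' := by exact_mod_cast hn2
      let p : ℕ → ℤ := fun x => if x ≤ k then I + 2 * n + max (-(x : ℤ)) (x - 2 * d)
        else I + 2 * n + u - d + max (-((x : ℤ) - k)) (((x : ℤ) - k) - 2 * d')
      have hpk : p k = I + 2 * n + u - d := by
        simp only [p]; rw [if_pos le_rfl]; omega
      have hp0 : p 0 = I + 2 * n := by
        simp only [p]; rw [if_pos (by omega)]; omega
      have hpN : p (N + 1) = I + 2 * n + u - d + u' - d' := by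
        simp only [p]; rw [if_neg (by omega)]; push_cast; omega
      refine ⟨p, ⟨?_, ?_, ?_⟩, k, by omega, by omega, ?_, ?_, ?_⟩
      · intro x hx
        simp only [p]
        split_ifs <;> push_cast <;> omega
      · rw [hp0]; push_cast; linarith
      · rw [hpN]; push_cast; linarith
      · ext <;> simp only [pathSeg, hpk] <;> push_cast <;> linarith
      · rw [hpk]; simp only [p]; rw [if_pos (by omega)]; omega
      · rw [hpk]; simp only [p]; rw [if_neg (by omega)]; push_cast; omega

end SnakePaper
end

section
/- Let s = [i, j] be a proper segment, p ∈ ℙ_s an MY path for s, and s' = [m, n] ∈ c_p^− with s' ≠ *s = [j, i + h]. Then: (i) if m < j, there exists n' with m < n' < n such that [m, n'] ∈ c_p^+; (ii) if n < h + i, there exists m' with n − h < m' < m such that [m', n] ∈ c_p^+. In either case the produced segment s'' ∈ c_p^+ satisfies spar(s'') = spar(s') − |supp(s'') − supp(s')|. -/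
namespace SnakePaper

/-- Walking left from an up-step ending at `k` one meets a local minimum. -/
theorem exists_left (N : ℕ) (p : ℕ → ℤ)
    (hstep : ∀ k, k < N + 1 → p (k + 1) = p k + 1 ∨ p (k + 1) = p k - 1) :
    ∀ k : ℕ, k < N + 1 → p (k + 1) = p k + 1 → p k - k < p 0 →
      ∃ l : ℕ, 1 ≤ l ∧ l ≤ k ∧ p l - l = p k - k ∧ p (l - 1) = p l + 1 ∧
        p (l + 1) = p l + 1 := by
  intro k
  induction k with
  | zero => intro _ _ h; simp at h
  | succ k ih =>
    intro hk hup hlt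
    rcases hstep k (by omega) with h | h
    · obtain ⟨l, h1, h2, h3, h4, h5⟩ := ih (by omega) h (by push_cast at hlt; omega)
      exact ⟨l, h1, by omega, by push_cast; omega, h4, h5⟩
    · exact ⟨k + 1, by omega, le_refl _, rfl, by simp only [Nat.add_sub_cancel]; omega, hup⟩

/-- Walking right from a down-step ending at `k` one meets a local minimum. -/
theorem exists_right (N : ℕ) (p : ℕ → ℤ)
    (hstep : ∀ k, k < N + 1 → p (k + 1) = p k + 1 ∨ p (k + 1) = p k - 1) :
    ∀ d k : ℕ, k + d = N + 1 → 1 ≤ k → p (k - 1) = p k + 1 →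
      p k + k < p (N + 1) + (N + 1) →
      ∃ l : ℕ, k ≤ l ∧ l ≤ N ∧ p l + l = p k + k ∧ p (l - 1) = p l + 1 ∧
        p (l + 1) = p l + 1 := by
  intro d
  induction d with
  | zero =>
    intro k hk _ _ h
    obtain rfl : k = N + 1 := by omega
    push_cast at h; omega
  | succ d ih =>
    intro k hk h1 hdn hlt
    rcases hstep k (by omega) with h | h
    · exact ⟨k, le_refl _, by omega, rfl, hdn, h⟩
    · obtain ⟨l, h2, h3, h4, h5, h6⟩ := ih (k + 1) (by omega) (by omega)
        (by simp only [Nat.add_sub_cancel]; omega) (by push_cast; omega)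
      exact ⟨l, by omega, h3, by push_cast at h4; omega, h5, h6⟩

/-- Let `s = [i,j]` be a proper segment, `p ∈ ℙ_s`, and `s' = [m,n] ∈ c_p^-` with
`s' ≠ *s`. If `m < j` there is `m < n' < n` with `[m, n'] ∈ c_p^+`; if `n < h + i`
there is `n − h < m' < m` with `[m', n] ∈ c_p^+`; in either case the produced
segment `s''` satisfies `spar(s'') = spar(s') − |supp(s'') − supp(s')|`. -/
theorem lowtoup (N : ℕ) (hN : 1 ≤ N) (s : ℚ × ℚ) (hs : IsProperSeg N s)
    (p : ℕ → ℤ) (hp : IsMYPath N s p) (s' : ℚ × ℚ)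
    (hs' : s' ∈ cMinus N p) (hne : s' ≠ ldual N s) :
    (zlt s'.1 s.2 →
      ∃ n' : ℚ, zlt s'.1 n' ∧ zlt n' s'.2 ∧ (s'.1, n') ∈ cPlus N p ∧
        spar (s'.1, n') = spar s' - |supp (s'.1, n') - supp s'|) ∧
    (zlt s'.2 (((N : ℚ) + 1) + s.1) →
      ∃ m' : ℚ, zlt (s'.2 - ((N : ℚ) + 1)) m' ∧ zlt m' s'.1 ∧ (m', s'.2) ∈ cPlus N p ∧
        spar (m', s'.2) = spar s' - |supp (m', s'.2) - supp s'|) := by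
  obtain ⟨hstep, h0, hend⟩ := hp
  obtain ⟨k, hk1, hkN, rfl, hl, hr⟩ := hs'
  constructor
  · rintro ⟨a, ha, hae⟩
    obtain ⟨k, rfl⟩ : ∃ c, k = c + 1 := ⟨k - 1, by omega⟩
    simp only [Nat.add_sub_cancel] at hl
    have hlt : p k - k < p 0 := by
      have : (0 : ℚ) < a := by exact_mod_cast ha
      have hl' : (p k : ℚ) = p (k + 1) - 1 := by exact_mod_cast hl
      have : (p k : ℚ) - k < p 0 := by
        simp only [pathSeg] at hae
        push_cast at hae
        linarith
      exact_mod_cast this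
    obtain ⟨l, h1, h2, h3, h4, h5⟩ :=
      exists_left N p hstep k (by omega) (by omega) hlt
    have e : (p (k + 1) : ℚ) = p l - l + k + 1 := by
      have : p (k + 1) = p l - l + k + 1 := by omega
      exact_mod_cast this
    have hlk : (l : ℚ) ≤ k := by exact_mod_cast h2
    refine ⟨((p l : ℚ) + l) / 2, ⟨l, by omega, ?_⟩, ⟨(k : ℤ) + 1 - l, by omega, ?_⟩,
      ⟨l, h1, by omega, ?_, h4, h5⟩, ?_⟩
    · simp only [pathSeg]; push_cast; rw [e]; ring
    · simp only [pathSeg]; push_cast; rw [e]; ring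
    · simp only [pathSeg, Prod.mk.injEq, and_true]; push_cast; rw [e]; ring
    · simp only [pathSeg, spar, supp]; push_cast; rw [e, abs_of_nonpos (by linarith)]; ring
  · rintro ⟨a, ha, hae⟩
    have hlt : p k + k < p (N + 1) + (N + 1) := by
      have : (0 : ℚ) < a := by exact_mod_cast ha
      have : (p k : ℚ) + k < p (N + 1) + (N + 1) := by
        simp only [pathSeg] at hae
        linarith
      exact_mod_cast this
    have hr' : p (k + 1 - 1) = p (k + 1) + 1 := by
      simp only [Nat.add_sub_cancel]; omega
    obtain ⟨l, h1, h2, h3, h4, h5⟩ :=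
      exists_right N p hstep (N - k) (k + 1) (by omega) (by omega) hr'
        (by push_cast; omega)
    have e : (p k : ℚ) = p l + l - k := by
      have : p k = p l + l - k := by push_cast at h3; omega
      exact_mod_cast this
    have hlk : (k : ℚ) + 1 ≤ l := by exact_mod_cast h1
    refine ⟨((p l : ℚ) - l) / 2, ⟨(N : ℤ) + 1 - l, by omega, ?_⟩, ⟨(l : ℤ) - k, by omega, ?_⟩,
      ⟨l, by omega, h2, ?_, h4, h5⟩, ?_⟩
    · simp only [pathSeg]; push_cast; rw [e]; ring
    · simp only [pathSeg]; push_cast; rw [e]; ring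
    · simp only [pathSeg, Prod.mk.injEq, true_and]; rw [e]; ring
    · simp only [pathSeg, spar, supp]; rw [e, abs_of_nonneg (by linarith)]; ring

end SnakePaper
end

section
/- Let s₁ = [i₁, j₁] be a segment and s₂ = [i₂, j₂] ∈ c_{s₁}^+ (so i₁ ≤ i₂ < j₁ ≤ j₂ < h + i₁). Then there exists a unique MY path p ∈ ℙ_{s₁} with c_p^+ = {s₂}; moreover, for this p, c_p^− is the set of those segments among [j₁, j₂] and [i₂, h + i₁] that are proper (i.e. [j₁, j₂] belongs to c_p^− iff j₁ < j₂, and [i₂, h + i₁] belongs to c_p^− iff i₁ < i₂). -/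
namespace SnakePaper

/-- the two-peak valley path shape -/
def vshape (p0 pK : ℤ) (K : ℕ) (pe : ℤ) (M : ℕ) (k : ℕ) : ℤ :=
  if k ≤ K then min (p0 + k) (pK + K - k) else min (pK + k - K) (pe + M - k)

theorem path_lip_s10 (p : ℕ → ℤ) (M A : ℕ)
    (hs : ∀ k, k < M → p (k + 1) = p k + 1 ∨ p (k + 1) = p k - 1) :
    ∀ n, A + n ≤ M → p (A + n) ≤ p A + n ∧ p A ≤ p (A + n) + n ∧
      (∃ a : ℤ, p (A + n) = p A + 2 * a - n) := by
  intro n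
  induction n with
  | zero => intro _; simp
  | succ n ih =>
    intro h
    obtain ⟨h1, h2, a, ha⟩ := ih (by omega)
    have := hs (A + n) (by omega)
    rw [← add_assoc]
    push_cast
    rcases this with h3 | h3
    · exact ⟨by omega, by omega, a + 1, by omega⟩
    · exact ⟨by omega, by omega, a, by omega⟩

theorem path_down (p : ℕ → ℤ) (M B : ℕ) (hB : B ≤ M)
    (hs : ∀ k, k < M → p (k + 1) = p k + 1 ∨ p (k + 1) = p k - 1)
    (A : ℕ) (hv : ∀ k, A < k → k < B → ¬ (p (k - 1) = p k + 1 ∧ p (k + 1) = p k + 1))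
    (hd : p (A + 1) = p A - 1) : ∀ n, A + 1 + n ≤ B →
      p (A + 1 + n) = p A - 1 - n ∧ p (A + n) = p A - n := by
  intro n
  induction n with
  | zero => intro _; simpa using hd
  | succ n ih =>
    intro h
    obtain ⟨h1, h2⟩ := ih (by omega)
    have h3 := hs (A + 1 + n) (by omega)
    have h4 := hv (A + 1 + n) (by omega) (by omega)
    have e : A + 1 + n - 1 = A + n := by omega
    rw [e] at h4
    have e2 : A + (n + 1) = A + 1 + n := by omega
    rw [← add_assoc, e2]
    push_cast
    omega

theorem path_noval (p : ℕ → ℤ) (M B : ℕ) (hB : B ≤ M)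
    (hs : ∀ k, k < M → p (k + 1) = p k + 1 ∨ p (k + 1) = p k - 1)
    (A : ℕ) (hv : ∀ k, A < k → k < B → ¬ (p (k - 1) = p k + 1 ∧ p (k + 1) = p k + 1)) :
    ∀ n, A + n ≤ B → p (A + n) = p A + n ∨ p (A + n) = p B + (B : ℤ) - (A + n : ℕ) := by
  intro n
  induction n with
  | zero => intro _; simp
  | succ n ih =>
    intro h
    rcases ih (by omega) with h1 | h1
    · rcases hs (A + n) (by omega) with h2 | h2
      · left; rw [← add_assoc]; push_cast; omega
      · right
        have h3 := path_down p M B hB hs (A + n) (fun k h5 h6 => hv k (by omega) h6) h2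
          (B - (A + n + 1)) (by omega)
        have e : A + n + 1 + (B - (A + n + 1)) = B := by omega
        rw [e] at h3
        rw [← add_assoc]
        omega
    · right
      have h3 := (path_lip_s10 p M (A + n + 1) hs (B - (A + n + 1)) (by omega)).2.1
      have e : A + n + 1 + (B - (A + n + 1)) = B := by omega
      rw [e] at h3
      have := hs (A + n) (by omega)
      rw [← add_assoc]
      omega

theorem path_min (p : ℕ → ℤ) (M B : ℕ) (hB : B ≤ M)
    (hs : ∀ k, k < M → p (k + 1) = p k + 1 ∨ p (k + 1) = p k - 1)
    (A : ℕ) (hv : ∀ k, A < k → k < B → ¬ (p (k - 1) = p k + 1 ∧ p (k + 1) = p k + 1))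
    (k : ℕ) (h1 : A ≤ k) (h2 : k ≤ B) :
    p k = min (p A + k - A) (p B + B - k) := by
  obtain ⟨n, rfl⟩ := Nat.exists_eq_add_of_le h1
  have a1 := path_noval p M B hB hs A hv n h2
  have a2 := path_lip_s10 p M A hs n (by omega)
  have a3 := path_lip_s10 p M (A + n) hs (B - (A + n)) (by omega)
  have e : A + n + (B - (A + n)) = B := by omega
  rw [e] at a3
  omega

theorem path_shape (p : ℕ → ℤ) (N K : ℕ) (hK : 1 ≤ K) (hKN : K ≤ N)
    (hs : ∀ k, k < N + 1 → p (k + 1) = p k + 1 ∨ p (k + 1) = p k - 1)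
    (hv : ∀ k, 1 ≤ k → k ≤ N → p (k - 1) = p k + 1 → p (k + 1) = p k + 1 → k = K)
    (k : ℕ) (hk : k ≤ N + 1) :
    p k = vshape (p 0) (p K) K (p (N + 1)) (N + 1) k := by
  unfold vshape
  split_ifs with h
  · have := path_min p (N + 1) K (by omega) hs 0
      (fun k h1 h2 h3 => by have := hv k (by omega) (by omega) h3.1 h3.2; omega) k (by omega) h
    simpa using this
  · have := path_min p (N + 1) (N + 1) le_rfl hs K
      (fun k h1 h2 h3 => by have := hv k (by omega) (by omega) h3.1 h3.2; omega) k (by omega) hk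
    simpa using this

/-- numeric data at a valley -/
theorem valley_data (p : ℕ → ℤ) (N K : ℕ) (hK : 1 ≤ K) (hKN : K ≤ N)
    (hs : ∀ k, k < N + 1 → p (k + 1) = p k + 1 ∨ p (k + 1) = p k - 1)
    (v1 : p (K - 1) = p K + 1) (v2 : p (K + 1) = p K + 1) :
    ∃ a b : ℕ, a < K ∧ 0 < b ∧ K + b ≤ N + 1 ∧ p K = p 0 + 2 * a - K ∧
      p (N + 1) = p K + 2 * b - ((N + 1 : ℕ) - K) := by
  obtain ⟨x1, x2, a, ha⟩ := path_lip_s10 p (N + 1) 0 hs (K - 1) (by omega)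
  obtain ⟨y1, y2, b, hb⟩ := path_lip_s10 p (N + 1) (K + 1) hs (N - K) (by omega)
  have e : K + 1 + (N - K) = N + 1 := by omega
  rw [e] at y1 y2 hb
  rw [zero_add] at x1 x2 ha
  exact ⟨a.toNat, (b + 1).toNat, by omega, by omega, by omega, by omega, by omega⟩

theorem pathSeg_eq {p : ℕ → ℤ} {k : ℕ} {s : ℚ × ℚ} (h : s = pathSeg p k) :
    (p k : ℚ) = s.1 + s.2 ∧ (k : ℚ) = s.2 - s.1 := by
  subst h
  simp only [pathSeg]
  constructor <;> ring

theorem pathSeg_inj {p q : ℕ → ℤ} {k l : ℕ} (h : pathSeg p k = pathSeg q l) :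
    k = l ∧ p k = q l := by
  have h1 := pathSeg_eq (p := p) (k := k) rfl
  have h2 := pathSeg_eq (p := q) (k := l) rfl
  rw [h] at h1
  constructor
  · have : (k : ℚ) = l := by rw [h1.2, h2.2]
    exact_mod_cast this
  · have : (p k : ℚ) = q l := by rw [h1.1, h2.1]
    exact_mod_cast this

theorem plus_data {N : ℕ} {p : ℕ → ℤ} {s : ℚ × ℚ} (h : cPlus N p = {s}) :
    ∃ K, 1 ≤ K ∧ K ≤ N ∧ s = pathSeg p K ∧ p (K - 1) = p K + 1 ∧ p (K + 1) = p K + 1 ∧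
    (∀ k, 1 ≤ k → k ≤ N → p (k - 1) = p k + 1 → p (k + 1) = p k + 1 → k = K) := by
  have hm : s ∈ cPlus N p := by rw [h]; rfl
  obtain ⟨K, h1, h2, h3, h4, h5⟩ := hm
  refine ⟨K, h1, h2, h3, h4, h5, fun k a b c d => ?_⟩
  have : pathSeg p k ∈ cPlus N p := ⟨k, a, b, rfl, c, d⟩
  rw [h, Set.mem_singleton_iff, h3] at this
  exact (pathSeg_inj this).1

/-- Let `s₁ = [i₁,j₁]` be a segment and `s₂ = [i₂,j₂] ∈ c_{s₁}^+`. There is a unique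
(on `{0,…,h}`) MY path `p ∈ ℙ_{s₁}` with `c_p^+ = {s₂}`; for this `p`, `c_p^-` consists
of those of `[j₁, j₂]` and `[i₂, h + i₁]` that are proper ( `[j₁,j₂]` iff `j₁ < j₂`,
`[i₂, h+i₁]` iff `i₁ < i₂`). -/
theorem valley_path (N : ℕ) (hN : 1 ≤ N) (s₁ s₂ : ℚ × ℚ)
    (h₁ : IsSeg N s₁) (h₂ : s₂ ∈ cSegPlus N s₁) :
    (∃ p, IsMYPath N s₁ p ∧ cPlus N p = {s₂}) ∧
    (∀ p p', IsMYPath N s₁ p → IsMYPath N s₁ p' →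
      cPlus N p = {s₂} → cPlus N p' = {s₂} → ∀ k, k ≤ N + 1 → p k = p' k) ∧
    (∀ p, IsMYPath N s₁ p → cPlus N p = {s₂} →
      cMinus N p =
        {t : ℚ × ℚ | (t = (s₁.2, s₂.2) ∧ zlt s₁.2 s₂.2) ∨
          (t = (s₂.1, ((N : ℚ) + 1) + s₁.1) ∧ zlt s₁.1 s₂.1)}) := by
  refine ⟨?_, ?_, ?_⟩
  · obtain ⟨q, ⟨hs, q0, qe⟩, K, hK, hKN, hq, v1, v2⟩ := h₂
    obtain ⟨a, b, ha, hb, hab, e1, e2⟩ := valley_data q N K hK hKN hs v1 v2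
    have f0 : vshape (q 0) (q K) K (q (N + 1)) (N + 1) 0 = q 0 := by
      simp only [vshape]; split_ifs <;> omega
    have fe : vshape (q 0) (q K) K (q (N + 1)) (N + 1) (N + 1) = q (N + 1) := by
      simp only [vshape]; split_ifs <;> omega
    have fK : vshape (q 0) (q K) K (q (N + 1)) (N + 1) K = q K := by
      simp only [vshape]; split_ifs <;> omega
    refine ⟨vshape (q 0) (q K) K (q (N + 1)) (N + 1), ⟨?_, ?_, ?_⟩, ?_⟩
    · intro k hk
      simp only [vshape]; split_ifs <;> omega
    · rw [f0]; exact q0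
    · rw [fe]; exact qe
    · have hq' : s₂ = pathSeg (vshape (q 0) (q K) K (q (N + 1)) (N + 1)) K := by
        rw [hq]; simp only [pathSeg, fK]
      ext t
      rw [Set.mem_singleton_iff]
      constructor
      · rintro ⟨k, k1, k2, rfl, k3, k4⟩
        have : k = K := by
          simp only [vshape] at k3 k4; split_ifs at k3 k4 <;> omega
        rw [this, hq']
      · rintro rfl
        refine ⟨K, hK, hKN, hq', ?_, ?_⟩
        · simp only [vshape]; split_ifs <;> omega
        · simp only [vshape]; split_ifs <;> omega
  · rintro p p' ⟨hs, p0, pe⟩ ⟨hs', p0', pe'⟩ hp hp' k hk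
    obtain ⟨K, hK, hKN, hq, v1, v2, hv⟩ := plus_data hp
    obtain ⟨K', hK', hKN', hq', v1', v2', hv'⟩ := plus_data hp'
    obtain ⟨rfl, hKK⟩ := pathSeg_inj (hq.symm.trans hq')
    have z0 : p 0 = p' 0 := by exact_mod_cast p0.trans p0'.symm
    have ze : p (N + 1) = p' (N + 1) := by exact_mod_cast pe.trans pe'.symm
    rw [path_shape p N K hK hKN hs hv k hk, path_shape p' N K hK hKN hs' hv' k hk, z0, ze, hKK]
  · rintro p ⟨hs, p0, pe⟩ hp
    obtain ⟨K, hK, hKN, hq, v1, v2, hv⟩ := plus_data hp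
    obtain ⟨a, b, ha, hb, hab, e1, e2⟩ := valley_data p N K hK hKN hs v1 v2
    obtain ⟨c1, c2⟩ := pathSeg_eq hq
    have hsh := path_shape p N K hK hKN hs hv
    have r1 : (p K : ℚ) = p 0 + 2 * a - K := by exact_mod_cast e1
    have r2 : (p (N + 1) : ℚ) = p K + 2 * b - ((N + 1 : ℕ) - K) := by exact_mod_cast e2
    push_cast at r2
    have d1 : s₂.2 - s₁.2 = a := by linarith
    have d2 : s₂.1 - s₁.1 = ((N + 1 - K - b : ℤ) : ℚ) := by push_cast; linarith
    have g1 : zlt s₁.2 s₂.2 ↔ 1 ≤ a := by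
      constructor
      · rintro ⟨n, h0, h1⟩
        rw [d1] at h1
        have : (a : ℤ) = n := by exact_mod_cast h1
        omega
      · intro h; exact ⟨a, by omega, by rw [d1]; simp⟩
    have g2 : zlt s₁.1 s₂.1 ↔ K + b ≤ N := by
      constructor
      · rintro ⟨n, h0, h1⟩
        rw [d2] at h1
        have : (N + 1 - K - b : ℤ) = n := by exact_mod_cast h1
        omega
      · intro h; exact ⟨_, by omega, d2⟩
    have pa : p a = p 0 + a := by
      rw [hsh a (by omega)]; simp only [vshape]; split_ifs <;> omega
    have pb : p (K + b) = p K + b := by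
      rw [hsh (K + b) (by omega)]; simp only [vshape]; split_ifs <;> omega
    have ra : (p a : ℚ) = p 0 + a := by exact_mod_cast pa
    have rb : (p (K + b) : ℚ) = p K + b := by exact_mod_cast pb
    have sa : pathSeg p a = (s₁.2, s₂.2) := by
      simp only [pathSeg, ra]
      ext
      · simp only; linarith
      · simp only; linarith
    have sb : pathSeg p (K + b) = (s₂.1, ((N : ℚ) + 1) + s₁.1) := by
      simp only [pathSeg, rb]
      ext
      · simp only; push_cast; linarith
      · simp only; push_cast; linarith
    ext t
    simp only [Set.mem_setOf_eq, g1, g2, cMinus, ← sa, ← sb]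
    constructor
    · rintro ⟨k, k1, k2, rfl, k3, k4⟩
      have : (k = a) ∨ (k = K + b) := by
        rw [hsh (k - 1) (by omega), hsh k (by omega)] at k3
        rw [hsh (k + 1) (by omega), hsh k (by omega)] at k4
        simp only [vshape] at k3 k4
        split_ifs at k3 k4 <;> omega
      rcases this with rfl | rfl
      · exact Or.inl ⟨rfl, k1⟩
      · exact Or.inr ⟨rfl, k2⟩
    · rintro (⟨rfl, h⟩ | ⟨rfl, h⟩)
      · refine ⟨a, h, by omega, rfl, ?_, ?_⟩
        · rw [pa, hsh (a - 1) (by omega)]; simp only [vshape]; split_ifs <;> omega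
        · rw [pa, hsh (a + 1) (by omega)]; simp only [vshape]; split_ifs <;> omega
      · refine ⟨K + b, by omega, h, rfl, ?_, ?_⟩
        · rw [pb, hsh (K + b - 1) (by omega)]; simp only [vshape]; split_ifs <;> omega
        · rw [pb, hsh (K + b + 1) (by omega)]; simp only [vshape]; split_ifs <;> omega

end SnakePaper
end

section
/- Let 𝐬 = (s₁, …, s_l) be a ladder and let p_m ∈ ℙ_{s_m} be an MY path for s_m, for each 1 ≤ m ≤ l. Then (p₁, …, p_l) ∈ ℙ_𝐬 if and only if for every 1 ≤ m < l and every segment s ∈ c_{p_m}^−, one has p_{m+1}(supp(s)) > p_m(supp(s)) (as integers). -/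
namespace SnakePaper

theorem adj_lt (N : ℕ) (p q : ℕ → ℤ)
    (hp : ∀ k, k < N + 1 → p (k + 1) = p k + 1 ∨ p (k + 1) = p k - 1)
    (hq : ∀ k, k < N + 1 → q (k + 1) = q k + 1 ∨ q (k + 1) = q k - 1)
    (h0 : p 0 < q 0) (h1 : p (N + 1) < q (N + 1))
    (hmax : ∀ k, 1 ≤ k → k ≤ N → p (k - 1) = p k - 1 → p (k + 1) = p k - 1 → p k < q k) :
    ∀ k, k ≤ N + 1 → p k < q k := by
  have down : ∀ k, k < N + 1 → p (k + 1) = p k - 1 → p k < q k := by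
    intro k
    induction k with
    | zero => intro _ _; exact h0
    | succ k ih =>
      intro hk hd
      rcases hp k (by omega) with h | h
      · exact hmax (k + 1) (by omega) (by omega) (by simp only [Nat.add_sub_cancel]; omega) hd
      · have := ih (by omega) h
        rcases hq k (by omega) with h' | h' <;> omega
  have key : ∀ d k, k + d = N + 1 → p k < q k := by
    intro d
    induction d with
    | zero => intro k hk; obtain rfl : k = N + 1 := by omega
              exact h1
    | succ d ih =>
      intro k hk
      rcases hp k (by omega) with h | h
      · have := ih (k + 1) (by omega)
        rcases hq k (by omega) with h' | h' <;> omega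
      · exact down k (by omega) h
  intro k hk
  exact key (N + 1 - k) k (by omega)

theorem supp_pathSeg (p : ℕ → ℤ) (k : ℕ) : supp (pathSeg p k) = (k : ℚ) := by
  simp only [supp, pathSeg]; ring

/-- For a ladder `𝐬` and MY paths `p_m ∈ ℙ_{s_m}`: `(p₁, …, p_l) ∈ ℙ_𝐬` iff for every
`m < l` and every `t ∈ c_{p_m}^-` one has `p_{m+1}(supp(t)) > p_m(supp(t))`. -/
theorem pathTuple_iff_local_max (N : ℕ) (hN : 1 ≤ N) (l : ℕ) (s : ℕ → ℚ × ℚ)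
    (hlad : IsLadder N l s) (p : ℕ → ℕ → ℤ)
    (hp : ∀ m, m < l → IsMYPath N (s m) (p m)) :
    IsPathTuple N l s p ↔
      ∀ m, m + 1 < l → ∀ t ∈ cMinus N (p m), ∀ k : ℕ, (k : ℚ) = supp t →
        p m k < p (m + 1) k := by
  constructor
  · rintro ⟨_, h⟩ m hm t ⟨k', h1, h2, rfl, _, _⟩ k hk
    rw [supp_pathSeg] at hk
    have hk' : k = k' := by exact_mod_cast hk
    exact h m (m + 1) (by omega) hm k (by omega)
  · intro h
    refine ⟨hp, ?_⟩
    have adj : ∀ m, m + 1 < l → ∀ k, k ≤ N + 1 → p m k < p (m + 1) k := by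
      intro m hm
      obtain ⟨a1, a2, a3⟩ := hp m (by omega)
      obtain ⟨b1, b2, b3⟩ := hp (m + 1) hm
      obtain ⟨⟨u, hu, hu'⟩, ⟨v, hv, hv'⟩⟩ := hlad.2 m (m + 1) (by omega) hm
      have huq : (0 : ℚ) < u := by exact_mod_cast hu
      have hvq : (0 : ℚ) < v := by exact_mod_cast hv
      refine adj_lt N _ _ a1 b1 ?_ ?_ ?_
      · have : (p m 0 : ℚ) < p (m + 1) 0 := by linarith
        exact_mod_cast this
      · have : (p m (N + 1) : ℚ) < p (m + 1) (N + 1) := by linarith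
        exact_mod_cast this
      · intro k k1 k2 k3 k4
        exact h m hm (pathSeg (p m) k) ⟨k, k1, k2, rfl, k3, k4⟩ k (supp_pathSeg _ _).symm
    intro m n hmn
    induction n, hmn using Nat.le_induction with
    | base => exact fun hn k hk => adj m hn k hk
    | succ n hmn ih =>
      intro hn k hk
      exact (ih (by omega) k hk).trans (adj n hn k hk)

end SnakePaper
end

section
/- Let 𝐬 = (s₁, …, s_l) and 𝐬' = (s'₁, …, s'_l) be ladders of length l with s_k ▷ s'_k for all 1 ≤ k ≤ l, and for each k let p_k ∈ ℙ_{s'_k} be an MY path with c_{p_k}^− = {s_k}. Then (p₁, …, p_l) ∈ ℙ_{𝐬'}. -/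
namespace SnakePaper

/-- Discrete Lipschitz bound. -/
lemma path_lip_s13 (f : ℕ → ℤ) (H : ℕ)
    (hf : ∀ k, k < H → f (k + 1) = f k + 1 ∨ f (k + 1) = f k - 1) (a : ℕ) :
    ∀ b, a ≤ b → b ≤ H → f b ≤ f a + ((b : ℤ) - a) ∧ f a ≤ f b + ((b : ℤ) - a) := by
  intro b hab
  induction b, hab using Nat.le_induction with
  | base => intro _; constructor <;> linarith
  | succ n hn ih =>
    intro h
    have h1 := ih (by omega)
    have h2 := hf n (by omega)
    push_cast
    omega

/-- After an up step there are only up steps, as long as there is no local maximum. -/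
lemma path_up (f : ℕ → ℤ) (H a b : ℕ) (hb : b ≤ H)
    (hf : ∀ k, k < H → f (k + 1) = f k + 1 ∨ f (k + 1) = f k - 1)
    (hpk : ∀ k, a < k → k < b → ¬ (f (k - 1) = f k - 1 ∧ f (k + 1) = f k - 1))
    (k : ℕ) (hak : a ≤ k) (hup : f (k + 1) = f k + 1) :
    ∀ m, k + 1 ≤ m → m ≤ b → f m = f (m - 1) + 1 ∧ f m = f k + ((m : ℤ) - k) := by
  intro m hm
  induction m, hm using Nat.le_induction with
  | base =>
    intro _
    refine ⟨by simpa using hup, ?_⟩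
    push_cast
    omega
  | succ n hn ih =>
    intro h
    obtain ⟨h1, h2⟩ := ih (by omega)
    have h3 := hf n (by omega)
    have h4 := hpk n (by omega) (by omega)
    have h5 : f (n + 1) = f n + 1 := by
      rcases h3 with h3 | h3
      · exact h3
      · exact absurd ⟨by omega, h3⟩ h4
    refine ⟨by simpa using h5, ?_⟩
    push_cast
    omega

/-- A path without interior local maximum is V-shaped. -/
lemma path_shape_s13 (f : ℕ → ℤ) (H a b : ℕ) (hb : b ≤ H)
    (hf : ∀ k, k < H → f (k + 1) = f k + 1 ∨ f (k + 1) = f k - 1)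
    (hpk : ∀ k, a < k → k < b → ¬ (f (k - 1) = f k - 1 ∧ f (k + 1) = f k - 1)) :
    ∀ k, a ≤ k → k ≤ b → f k = f a - ((k : ℤ) - a) ∨ f k = f b - ((b : ℤ) - k) := by
  intro k hk
  induction k, hk using Nat.le_induction with
  | base => intro _; left; ring
  | succ n hn ih =>
    intro h
    have h1 := ih (by omega)
    rcases hf n (by omega) with h2 | h2
    · right
      have := (path_up f H a b hb hf hpk n hn h2 b h le_rfl).2
      push_cast
      omega
    · rcases h1 with h1 | h1
      · left
        push_cast
        omega
      · have := (path_lip_s13 f H hf (n + 1) b h hb).1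
        push_cast at this
        omega

/-- Full description of a path for `t` with exactly one local maximum `s`. -/
lemma path_desc (N : ℕ) (s t : ℚ × ℚ) (f : ℕ → ℤ) (hf : IsMYPath N t f)
    (hc : cMinus N f = {s}) : ∃ k0 : ℕ, k0 ≤ N + 1 ∧ (k0 : ℚ) = s.2 - s.1 ∧
      (f k0 : ℚ) = s.1 + s.2 ∧
      (∀ k, k ≤ k0 → f k = f 0 - (k : ℤ) ∨ f k = f k0 - ((k0 : ℤ) - k)) ∧
      (∀ k, k0 ≤ k → k ≤ N + 1 →
        f k = f k0 - ((k : ℤ) - k0) ∨ f k = f (N + 1) - (((N + 1 : ℕ) : ℤ) - k)) := by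
  have hmem : s ∈ cMinus N f := by rw [hc]; rfl
  obtain ⟨k0, h1, h2, h3, -, -⟩ := hmem
  have hk0 : (k0 : ℚ) = s.2 - s.1 := by rw [h3]; simp only [pathSeg]; ring
  have hv : (f k0 : ℚ) = s.1 + s.2 := by rw [h3]; simp only [pathSeg]; ring
  have huniq : ∀ k, 1 ≤ k → k ≤ N → f (k - 1) = f k - 1 ∧ f (k + 1) = f k - 1 → k = k0 := by
    intro k ha hb hk
    have hm : pathSeg f k ∈ cMinus N f := ⟨k, ha, hb, rfl, hk.1, hk.2⟩
    rw [hc] at hm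
    have hm : pathSeg f k = s := hm
    have : (k : ℚ) = s.2 - s.1 := by rw [← hm]; simp only [pathSeg]; ring
    exact_mod_cast this.trans hk0.symm
  refine ⟨k0, by omega, hk0, hv, ?_, ?_⟩
  · intro k hk
    have := path_shape_s13 f (N + 1) 0 k0 (by omega) hf.1
      (fun k ha hb hh => by have := huniq k (by omega) (by omega) hh; omega) k (by omega) hk
    simpa using this
  · exact path_shape_s13 f (N + 1) k0 (N + 1) le_rfl hf.1
      (fun k ha hb hh => by have := huniq k (by omega) (by omega) hh; omega)

lemma zlt.lt {a b : ℚ} (h : zlt a b) : a < b := by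
  obtain ⟨n, hn, h⟩ := h
  have : (0 : ℚ) < n := by exact_mod_cast hn
  linarith

/-- If `𝐬, 𝐬'` are ladders of length `l` with `s_k ▷ s'_k` for all `k` and
`p_k ∈ ℙ_{s'_k}` satisfies `c_{p_k}^- = {s_k}`, then `(p₁, …, p_l) ∈ ℙ_{𝐬'}`. -/
theorem cover_paths_tuple (N : ℕ) (hN : 1 ≤ N) (l : ℕ) (s s' : ℕ → ℚ × ℚ)
    (hs : IsLadder N l s) (hs' : IsLadder N l s')
    (hcov : ∀ k, k < l → Covers N (s k) (s' k))
    (p : ℕ → ℕ → ℤ)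
    (hp : ∀ k, k < l → IsMYPath N (s' k) (p k) ∧ cMinus N (p k) = {s k}) :
    IsPathTuple N l s' p := by
  refine ⟨fun m hm => (hp m hm).1, ?_⟩
  intro m n hmn hn k hk
  have hm : m < l := hmn.trans hn
  obtain ⟨hpm, hcm⟩ := hp m hm
  obtain ⟨hpn, hcn⟩ := hp n hn
  obtain ⟨a, ha, ha1, ha2, haL, haR⟩ := path_desc N _ _ _ hpm hcm
  obtain ⟨b, hb, hb1, hb2, -, -⟩ := path_desc N _ _ _ hpn hcn
  have hi := (hs.2 m n hmn hn).1.lt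
  have hj := (hs.2 m n hmn hn).2.lt
  have hi' := (hs'.2 m n hmn hn).1.lt
  have hj' := (hs'.2 m n hmn hn).2.lt
  have hc1 := (hcov m hm).1.lt
  have hc2 := (hcov m hm).2.2.1.lt
  have e1 := hpm.2.1
  have e2 := hpm.2.2
  have e3 := hpn.2.1
  have e4 := hpn.2.2
  -- transfer to integers
  have z1 : p m a - a < p n b - b := by
    have : (p m a : ℚ) - a < p n b - b := by linarith
    exact_mod_cast this
  have z2 : p m a + a < p n b + b := by
    have : (p m a : ℚ) + a < p n b + b := by linarith
    exact_mod_cast this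
  have z3 : p m 0 < p n 0 := by
    have : (p m 0 : ℚ) < p n 0 := by linarith
    exact_mod_cast this
  have z4 : p m (N + 1) < p n (N + 1) := by
    have : (p m (N + 1) : ℚ) < p n (N + 1) := by linarith
    exact_mod_cast this
  have L0 := (path_lip_s13 (p n) (N + 1) hpn.1 0 k (by omega) hk).2
  have L1 := (path_lip_s13 (p n) (N + 1) hpn.1 k (N + 1) hk le_rfl).1
  have z5 : p m (N + 1) - (N + 1 : ℕ) < p m a - a := by
    have : (p m (N + 1) : ℚ) - (N + 1 : ℕ) < p m a - a := by push_cast; linarith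
    exact_mod_cast this
  have z6 : p m 0 < p m a + a := by
    have : (p m 0 : ℚ) < p m a + a := by linarith
    exact_mod_cast this
  push_cast at L0 L1 z5 haR
  have Lb : (k ≤ b → p n b ≤ p n k + ((b : ℤ) - k)) ∧
      (b ≤ k → p n b ≤ p n k + ((k : ℤ) - b)) :=
    ⟨fun h => (path_lip_s13 (p n) (N + 1) hpn.1 k b h hb).1,
     fun h => (path_lip_s13 (p n) (N + 1) hpn.1 b k h hk).2⟩
  rcases le_total k a with h | h
  · have hA := haL k h
    rcases le_total k b with h' | h'
    · have := Lb.1 h'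
      omega
    · have := Lb.2 h'
      omega
  · have hA := haR k h hk
    rcases le_total k b with h' | h'
    · have := Lb.1 h'
      omega
    · have := Lb.2 h'
      omega

end SnakePaper
end

section
/- Let 𝐬 = (s₁, …, s_l) be a tuple of segments and let p_m ∈ ℙ_{s_m} for each 1 ≤ m ≤ l. Suppose that one of the following holds: (a) there exist 1 ≤ k < l and a segment s such that c_{p_k}^− = {s}, p_{k+1} = p_{s_{k+1}} is the highest path of ℙ_{s_{k+1}}, and spar(s) − spar(s_{k+1}) ≥ |supp(s) − supp(s_{k+1})|; or (b) there exist 1 ≤ k < m ≤ l and segments s, s' such that (s, s') is a ladder (of length 2), c_{p_k}^− = {s'}, and c_{p_m}^− = {s}. Then (p₁, …, p_l) ∉ ℙ_𝐬. -/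
namespace SnakePaper

/-- A path is 1-Lipschitz. -/
lemma path_lipschitz (N : ℕ) (q : ℕ → ℤ)
    (hq : ∀ k, k < N + 1 → q (k + 1) = q k + 1 ∨ q (k + 1) = q k - 1) (a d : ℕ)
    (h : a + d ≤ N + 1) : q (a + d) - q a ≤ d ∧ q a - q (a + d) ≤ d := by
  induction d with
  | zero => simp
  | succ d ih =>
    have h1 := ih (by omega)
    have h2 := hq (a + d) (by omega)
    rw [← add_assoc]
    push_cast
    omega

/-- Let `𝐬` be a tuple of segments and `p_m ∈ ℙ_{s_m}`. If either
(a) there are `k < l` and a segment `t` with `c_{p_k}^- = {t}`, `p_{k+1}` the highest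
path of `ℙ_{s_{k+1}}`, and `spar(t) − spar(s_{k+1}) ≥ |supp(t) − supp(s_{k+1})|`; or
(b) there are `k < m ≤ l` and a length-2 ladder `(t, t')` with `c_{p_k}^- = {t'}` and
`c_{p_m}^- = {t}`; then `(p₁, …, p_l) ∉ ℙ_𝐬`. -/
theorem not_pathTuple (N : ℕ) (hN : 1 ≤ N) (l : ℕ) (s : ℕ → ℚ × ℚ)
    (hseg : ∀ m, m < l → IsSeg N (s m))
    (p : ℕ → ℕ → ℤ) (hp : ∀ m, m < l → IsMYPath N (s m) (p m))
    (hab :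
      (∃ k, k + 1 < l ∧ ∃ t : ℚ × ℚ,
        cMinus N (p k) = {t} ∧
        (∀ j : ℕ, j ≤ N + 1 → (p (k + 1) j : ℚ) = highestPath (s (k + 1)) (j : ℚ)) ∧
        |supp t - supp (s (k + 1))| ≤ spar t - spar (s (k + 1))) ∨
      (∃ k m, k < m ∧ m < l ∧ ∃ t t' : ℚ × ℚ,
        IsLadder2 N t t' ∧ cMinus N (p k) = {t'} ∧ cMinus N (p m) = {t})) :
    ¬ IsPathTuple N l s p := by
  rintro ⟨-, hlt⟩
  rcases hab with ⟨k, hk, t, hc, hhigh, habs⟩ | ⟨k, m, hkm, hm, t, t', hlad, hc', hc⟩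
  · have ht : t ∈ cMinus N (p k) := by rw [hc]; rfl
    obtain ⟨a, ha1, haN, rfl, -, -⟩ := ht
    have h1 := hlt k (k + 1) (by omega) hk a (by omega)
    have h2 := hhigh a (by omega)
    have h3 : supp (pathSeg (p k) a) = (a : ℚ) := by simp only [supp, pathSeg]; ring
    have h4 : spar (pathSeg (p k) a) = (p k a : ℚ) := by simp only [spar, pathSeg]; ring
    rw [h3, h4] at habs
    unfold highestPath at h2
    have h5 : (p k a : ℚ) < (p (k + 1) a : ℚ) := by exact_mod_cast h1
    linarith
  · have ht : t ∈ cMinus N (p m) := by rw [hc]; rfl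
    have ht' : t' ∈ cMinus N (p k) := by rw [hc']; rfl
    obtain ⟨a, ha1, haN, rfl, -, -⟩ := ht
    obtain ⟨b, hb1, hbN, rfl, -, -⟩ := ht'
    obtain ⟨-, -, ⟨n1, hn1, e1⟩, ⟨n2, hn2, e2⟩⟩ := hlad
    have h1 := hlt k m hkm hm b (by omega)
    simp only [pathSeg] at e1 e2
    have f1 : p k b - b - (p m a - a) = 2 * n1 := by
      have : ((p k b - b - (p m a - a) : ℤ) : ℚ) = ((2 * n1 : ℤ) : ℚ) := by
        push_cast; linarith
      exact_mod_cast this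
    have f2 : p k b + b - (p m a + a) = 2 * n2 := by
      have : ((p k b + b - (p m a + a) : ℤ) : ℚ) = ((2 * n2 : ℤ) : ℚ) := by
        push_cast; linarith
      exact_mod_cast this
    rcases le_total a b with hab | hab
    · obtain ⟨d, rfl⟩ := Nat.exists_eq_add_of_le hab
      have := path_lipschitz N (p m) (hp m hm).1 a d (by omega)
      push_cast at f1 f2
      omega
    · obtain ⟨d, rfl⟩ := Nat.exists_eq_add_of_le hab
      have := path_lipschitz N (p m) (hp m hm).1 b d (by omega)
      push_cast at f1 f2
      omega

end SnakePaper
end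

section
/- Let s₁ = [i₁, j₁] and s₁' = [i₁', j₁'] be proper segments with s₁ ▷ s₁', and let s₂ = [i₂, j₂] and s₂' = [i₂', j₂'] be segments. Then the following are equivalent: (i) (s₁, s₂) and (s₁', s₂') are ladders and (s₁, s₂) ▷₁ (s₁', s₂') (i.e. s₁ ▷ s₁', s₂ ▷ s₂', and s₁ ▷ s₂'); (ii) i₁' < i₂' < i₁, j₁' < j₂' < j₁, i₁ < i₂ ≤ j₂', and j₁ < j₂ ≤ h + i₂'. Moreover, if such a pair (s₂, s₂') exists, then i₁ − i₁' ≥ 2, j₁ − j₁' ≥ 2, and h ≥ 4; and if h = 4, then necessarily supp(s₁) = 2, s₁' = s₁*, s₂ = 1 + s₁, and s₂' = 1 + s₁'. -/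
namespace SnakePaper

theorem IsProperSeg.isSeg {N : ℕ} {s : ℚ × ℚ} (h : IsProperSeg N s) : IsSeg N s := by
  obtain ⟨hm, n, hn, h0, h1⟩ := h
  exact ⟨hm, n, hn, h0.le, h1.le⟩

theorem zlt.le {a b : ℚ} (h : zlt a b) : zle a b := by
  obtain ⟨n, hn, e⟩ := h
  exact ⟨n, hn.le, e⟩

theorem zle.trans {a b c : ℚ} (h : zle a b) (h' : zle b c) : zle a c := by
  obtain ⟨n, hn, e⟩ := h
  obtain ⟨m, hm, e'⟩ := h'
  exact ⟨n + m, by omega, by push_cast; linarith⟩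

theorem zlt.trans_le {a b c : ℚ} (h : zlt a b) (h' : zle b c) : zlt a c := by
  obtain ⟨n, hn, e⟩ := h
  obtain ⟨m, hm, e'⟩ := h'
  exact ⟨n + m, by omega, by push_cast; linarith⟩

theorem zlt.add_one_le {a b : ℚ} (h : zlt a b) : a + 1 ≤ b := by
  obtain ⟨n, hn, e⟩ := h
  have : (1 : ℚ) ≤ n := by exact_mod_cast hn
  linarith

theorem zle.le' {a b : ℚ} (h : zle a b) : a ≤ b := by
  obtain ⟨n, hn, e⟩ := h
  have : (0 : ℚ) ≤ n := by exact_mod_cast hn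
  linarith

/-- Half-integrality transports along the integrality order. -/
theorem zle.half {a b : ℚ} (h : zle a b) (ha : ∃ m : ℤ, 2 * a = (m : ℚ)) :
    ∃ m : ℤ, 2 * b = (m : ℚ) := by
  obtain ⟨n, hn, e⟩ := h
  obtain ⟨m, hm⟩ := ha
  exact ⟨m + 2 * n, by push_cast; linarith⟩

theorem isSeg_of {N : ℕ} {s : ℚ × ℚ} (hm : ∃ m : ℤ, 2 * s.1 = (m : ℚ)) (h : zle s.1 s.2)
    (h' : s.2 ≤ (N : ℚ) + 1 + s.1) : IsSeg N s := by
  obtain ⟨n, hn, e⟩ := h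
  exact ⟨hm, n, e, hn, by linarith⟩

/-- The real inequalities carried by a `1`-covering pair. -/
theorem pair_ineqs {N : ℕ} {s₁ s₁' s₂ s₂' : ℚ × ℚ} (h : Pair1Cover N s₁ s₁' s₂ s₂') :
    s₁'.1 + 1 ≤ s₂'.1 ∧ s₂'.1 + 1 ≤ s₁.1 ∧ s₁'.2 + 1 ≤ s₂'.2 ∧ s₂'.2 + 1 ≤ s₁.2 ∧
    s₁.1 + 1 ≤ s₂.1 ∧ s₂.1 ≤ s₂'.2 ∧ s₁.2 + 1 ≤ s₂.2 ∧ s₂.2 ≤ (N : ℚ) + 1 + s₂'.1 ∧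
    s₁.1 ≤ s₁'.2 ∧ s₁.2 ≤ (N : ℚ) + 1 + s₁'.1 := by
  obtain ⟨⟨-, -, a1, a2⟩, ⟨-, -, b1, b2⟩, ⟨-, c2, -, c4⟩, ⟨-, d2, -, d4⟩, ⟨e1, -, e3, -⟩⟩ := h
  exact ⟨b1.add_one_le, e1.add_one_le, b2.add_one_le, e3.add_one_le, a1.add_one_le, d2.le',
    a2.add_one_le, d4.le', c2.le', c4.le'⟩

/-- Characterization of `1`-covering pairs of length-2 ladders extending
`s₁ ▷ s₁'`, together with the consequences `i₁ − i₁' ≥ 2`, `j₁ − j₁' ≥ 2`,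
`h ≥ 4`, and the rigidity in the case `h = 4`. -/
theorem one_cover_characterization (N : ℕ) (hN : 1 ≤ N) (s₁ s₁' : ℚ × ℚ)
    (h₁ : IsProperSeg N s₁) (h₁' : IsProperSeg N s₁') (hcov : Covers N s₁ s₁') :
    (∀ s₂ s₂' : ℚ × ℚ,
      Pair1Cover N s₁ s₁' s₂ s₂' ↔
        (zlt s₁'.1 s₂'.1 ∧ zlt s₂'.1 s₁.1 ∧ zlt s₁'.2 s₂'.2 ∧ zlt s₂'.2 s₁.2 ∧
         zlt s₁.1 s₂.1 ∧ zle s₂.1 s₂'.2 ∧ zlt s₁.2 s₂.2 ∧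
         zle s₂.2 (((N : ℚ) + 1) + s₂'.1))) ∧
    ((∃ s₂ s₂' : ℚ × ℚ, Pair1Cover N s₁ s₁' s₂ s₂') →
      2 ≤ s₁.1 - s₁'.1 ∧ 2 ≤ s₁.2 - s₁'.2 ∧ 3 ≤ N) ∧
    (∀ s₂ s₂' : ℚ × ℚ, Pair1Cover N s₁ s₁' s₂ s₂' → N = 3 →
      supp s₁ = 2 ∧ s₁' = dual N s₁ ∧ s₂ = shift s₁ ∧ s₂' = shift s₁') := by
  refine ⟨fun s₂ s₂' => ⟨?_, ?_⟩, ?_, ?_⟩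
  · rintro ⟨⟨-, -, a1, a2⟩, ⟨-, -, b1, b2⟩, -, ⟨-, d2, -, d4⟩, ⟨e1, -, e3, -⟩⟩
    exact ⟨b1, e1, b2, e3, a1, d2, a2, d4⟩
  · rintro ⟨b1, e1, b2, e3, a1, d2, a2, d4⟩
    have g1 := e1.add_one_le
    have g2 := a1.add_one_le
    have g3 := a2.add_one_le
    have g4 := e3.add_one_le
    have g5 := d4.le'
    have i22 : zle s₂'.1 s₂'.2 := (e1.le.trans a1.le).trans d2
    refine ⟨⟨h₁.isSeg, isSeg_of (a1.le.half h₁.1) ((d2.trans e3.le).trans a2.le) (by linarith),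
      a1, a2⟩, ⟨h₁'.isSeg, isSeg_of (b1.le.half h₁'.1) i22 (by linarith), b1, b2⟩, hcov,
      ⟨e1.trans_le a1.le, d2, e3.trans_le a2.le, d4⟩, ⟨e1, a1.le.trans d2, e3, a2.le.trans d4⟩⟩
  · rintro ⟨s₂, s₂', h⟩
    obtain ⟨q1, q2, q3, q4, q5, q6, q7, q8, q9, q10⟩ := pair_ineqs h
    refine ⟨by linarith, by linarith, ?_⟩
    have : (3 : ℚ) ≤ N := by linarith
    exact_mod_cast this
  · rintro s₂ s₂' h rfl
    obtain ⟨q1, q2, q3, q4, q5, q6, q7, q8, q9, q10⟩ := pair_ineqs h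
    push_cast at q8 q10
    refine ⟨?_, Prod.ext ?_ ?_, Prod.ext ?_ ?_, Prod.ext ?_ ?_⟩ <;>
      simp only [supp, dual, shift] <;> push_cast <;> linarith

end SnakePaper
end

section
/- Let s₁ = [i₁, j₁] and s₁' = [i₁', j₁'] be proper segments with s₁ ▷ s₁'. Then the set of pairs (s₂, s₂') of segments such that (s₁, s₂) and (s₁', s₂') are ladders and (s₁, s₂) ▷₁ (s₁', s₂') is finite with exactly (1/4)·(i₁ − i₁' − 1)·(j₁ − j₁' − 1)·(2h + i₁ + i₁' − 2j₁)·(j₁ + j₁' − 2i₁) elements. -/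
namespace SnakePaper

/-- Triangular index set: pairs `(k, l)` with `k < n` and `l ≤ e + k`. -/
def tri (n e : ℕ) : Finset (Σ _ : ℕ, ℕ) := (Finset.range n).sigma fun k => Finset.range (e + k + 1)

lemma tri_card (n e : ℕ) : ((tri n e).card : ℚ) = n * (2 * e + n + 1) / 2 := by
  unfold tri
  rw [Finset.card_sigma]
  induction n with
  | zero => simp
  | succ n ih =>
    rw [Finset.sum_range_succ]
    push_cast at ih ⊢
    rw [ih]
    simp
    ring

lemma mem_tri (n e : ℕ) (p : Σ _ : ℕ, ℕ) : p ∈ tri n e ↔ p.1 < n ∧ p.2 < e + p.1 + 1 := by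
  simp [tri]

/-- The pair of segments attached to indices. -/
def pairOf (c a b d : ℚ) (p : (Σ _ : ℕ, ℕ) × (Σ _ : ℕ, ℕ)) : (ℚ × ℚ) × (ℚ × ℚ) :=
  ((c + a + 1 + p.2.2, c + b + 1 + p.1.2), (c + 1 + p.1.1, c + d + 1 + p.2.1))

lemma pairOf_inj (c a b d : ℚ) : Function.Injective (pairOf c a b d) := by
  rintro ⟨⟨k, l⟩, ⟨k', l'⟩⟩ ⟨⟨m, n⟩, ⟨m', n'⟩⟩ h
  simpa [pairOf, and_comm, and_left_comm, and_assoc] using h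

/-- The number of pairs `(s₂, s₂')` making `(s₁, s₂)` and `(s₁', s₂')` ladders with
`(s₁, s₂) ▷₁ (s₁', s₂')` equals
`(1/4)(i₁−i₁'−1)(j₁−j₁'−1)(2h+i₁+i₁'−2j₁)(j₁+j₁'−2i₁)`. -/
theorem one_cover_count (N : ℕ) (hN : 1 ≤ N) (s₁ s₁' : ℚ × ℚ)
    (h₁ : IsProperSeg N s₁) (h₁' : IsProperSeg N s₁') (hcov : Covers N s₁ s₁') :
    Set.Finite {q : (ℚ × ℚ) × (ℚ × ℚ) | Pair1Cover N s₁ s₁' q.1 q.2} ∧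
    (Set.ncard {q : (ℚ × ℚ) × (ℚ × ℚ) | Pair1Cover N s₁ s₁' q.1 q.2} : ℚ) =
      (1 / 4) * (s₁.1 - s₁'.1 - 1) * (s₁.2 - s₁'.2 - 1) *
        (2 * ((N : ℚ) + 1) + s₁.1 + s₁'.1 - 2 * s₁.2) *
        (s₁.2 + s₁'.2 - 2 * s₁.1) := by
  obtain ⟨i, j⟩ := s₁
  obtain ⟨c, j'⟩ := s₁'
  have hcov0 := hcov
  obtain ⟨⟨A, hA, hA'⟩, ⟨F, hF, hF'⟩, ⟨M, hM, hM'⟩, ⟨E, hE, hE'⟩⟩ := hcov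
  obtain ⟨⟨w, hw⟩, P, hP, hP0, hPN⟩ := h₁
  obtain ⟨⟨w', hw'⟩, P', hP', hP0', hPN'⟩ := h₁'
  dsimp only at *
  obtain ⟨n, rfl⟩ : ∃ n : ℕ, A = n + 1 := ⟨(A - 1).toNat, by omega⟩
  obtain ⟨f, rfl⟩ : ∃ n : ℕ, F = n := ⟨F.toNat, by omega⟩
  obtain ⟨m, rfl⟩ : ∃ n : ℕ, M = n + 1 := ⟨(M - 1).toNat, by omega⟩
  obtain ⟨e, rfl⟩ : ∃ n : ℕ, E = n := ⟨E.toNat, by omega⟩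
  push_cast at hA' hF' hM' hE'
  have hi : i = c + (n + 1) := by linarith
  have hj' : j' = c + (n + 1 + f) := by linarith
  have hj : j = c + (n + 1 + f + (m + 1)) := by linarith
  have hh : (N : ℚ) + 1 = n + 1 + f + (m + 1) + e := by linarith
  have hset : {q : (ℚ × ℚ) × (ℚ × ℚ) | Pair1Cover N (i, j) (c, j') q.1 q.2} =
      Set.image (pairOf c (n + 1) (n + 1 + f + (m + 1)) (n + 1 + f))
        ((tri n e ×ˢ tri m f : Finset _) : Set _) := by
    have hNn : N + 1 = n + 1 + f + (m + 1) + e := by exact_mod_cast hh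
    ext ⟨⟨x, y⟩, ⟨u, v⟩⟩
    simp only [Set.mem_ofPred_eq, Set.mem_image, Finset.mem_coe, Finset.mem_product, mem_tri]
    constructor
    · rintro ⟨⟨-, -, ⟨X, hX, hX'⟩, ⟨Y, hY, hY'⟩⟩, ⟨-, -, ⟨U, hU, hU'⟩, ⟨V, hV, hV'⟩⟩, -,
        ⟨-, ⟨a, ha, ha'⟩, -, ⟨b, hb, hb'⟩⟩, ⟨⟨p, hp, hp'⟩, -, ⟨q, hq, hq'⟩, -⟩⟩
      dsimp only at *
      subst hi hj hj'
      have e1 : (a : ℚ) = ((f + V - X : ℤ) : ℚ) := by push_cast; linarith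
      have e2 : (b : ℚ) = ((e + U - Y : ℤ) : ℚ) := by push_cast; linarith
      have e3 : (p : ℚ) = ((n + 1 - U : ℤ) : ℚ) := by push_cast; linarith
      have e4 : (q : ℚ) = ((m + 1 - V : ℤ) : ℚ) := by push_cast; linarith
      norm_cast at e1 e2 e3 e4
      obtain ⟨X, rfl⟩ : ∃ n : ℕ, X = n + 1 := ⟨(X - 1).toNat, by omega⟩
      obtain ⟨Y, rfl⟩ : ∃ n : ℕ, Y = n + 1 := ⟨(Y - 1).toNat, by omega⟩
      obtain ⟨U, rfl⟩ : ∃ n : ℕ, U = n + 1 := ⟨(U - 1).toNat, by omega⟩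
      obtain ⟨V, rfl⟩ : ∃ n : ℕ, V = n + 1 := ⟨(V - 1).toNat, by omega⟩
      push_cast at hX' hY' hU' hV'
      refine ⟨(⟨U, Y⟩, ⟨V, X⟩), by dsimp only; omega, ?_⟩
      simp only [pairOf, Prod.mk.injEq]
      refine ⟨⟨?_, ?_⟩, ?_, ?_⟩ <;> linarith
    · rintro ⟨⟨⟨U, Y⟩, ⟨V, X⟩⟩, ⟨⟨h1, h2⟩, h3, h4⟩, hq⟩
      simp only [pairOf, Prod.mk.injEq] at hq h1 h2 h3 h4
      obtain ⟨⟨hx, hy⟩, hu, hv⟩ := hq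
      subst hx hy hu hv hi hj hj'
      refine ⟨⟨⟨⟨w, hw⟩, P, hP, hP0.le, hPN.le⟩,
          ⟨⟨w' + 2 * (n + 1 + 1 + X), by push_cast; linarith⟩,
            f + (m + 1) + Y - X, by push_cast; ring, by omega, ?_⟩,
          ⟨X + 1, by omega, by push_cast; ring⟩, ⟨Y + 1, by omega, by push_cast; ring⟩⟩,
        ⟨⟨⟨w', hw'⟩, P', hP', hP0'.le, hPN'.le⟩,
          ⟨⟨w' + 2 * (1 + U), by push_cast; linarith⟩,
            n + 1 + f + V - U, by push_cast; ring, by omega, ?_⟩,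
          ⟨U + 1, by omega, by push_cast; ring⟩, ⟨V + 1, by omega, by push_cast; ring⟩⟩,
        hcov0,
        ⟨⟨n + 1 + X - U, by omega, by push_cast; ring⟩,
          ⟨f + V - X, by omega, by push_cast; ring⟩,
          ⟨m + 1 + Y - V, by omega, by push_cast; ring⟩,
          ⟨e + U - Y, by omega, by push_cast; linarith⟩⟩,
        ⟨⟨n - U, by omega, by push_cast; ring⟩,
          ⟨f + V + 1, by omega, by push_cast; ring⟩,
          ⟨m - V, by omega, by push_cast; ring⟩,
          ⟨e + U + 1, by omega, by push_cast; linarith⟩⟩⟩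
      · have : (f + (m + 1) + Y - X : ℤ) ≤ N + 1 := by omega
        exact_mod_cast this
      · have : (n + 1 + f + V - U : ℤ) ≤ N + 1 := by omega
        exact_mod_cast this
  rw [hset]
  refine ⟨(Finset.finite_toSet _).image _, ?_⟩
  rw [Set.ncard_image_of_injective _ (pairOf_inj _ _ _ _), Set.ncard_coe_finset,
    Finset.card_product]
  push_cast
  rw [tri_card, tri_card, hh, hi, hj, hj']
  ring

end SnakePaper
end

section
/- Let l ≥ 2 and let 𝐬 = (s₁, …, s_l), 𝐬' = (s'₁, …, s'_l) be ladders with 𝐬 ▷₁ 𝐬' (so in particular s_r ▷ s'_r for all r and s_r ▷ s'_{r+1} for all r < l). Call a segment s 'small' if spar(s) ≤ spar(*s'₁) − |supp(s) − supp(*s'₁)|, where *s'₁ = [j'₁, i'₁ + h]. Then each of the segments s₁ ∩ s'₁, s₁ ∪ s'₁, s₁ ∩ s'₂, s₁ ∪ s'₂ is small. If moreover j'₁ < i₂ and j₂ − i'₁ > h, then s_l is not small (indeed spar(s_l) > spar(*s'₁) − |supp(s_l) − supp(*s'₁)|), and for every 2 ≤ r ≤ l and every t ∈ {r, r+1} with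 t ≤ l, neither s_r ∩ s'_t nor s_r ∪ s'_t is small. -/
namespace SnakePaper

theorem zle_tr {a b c : ℚ} (h1 : zle a b) (h2 : zle b c) : zle a c := by
  obtain ⟨n, hn, e⟩ := h1
  obtain ⟨m, hm, f⟩ := h2
  exact ⟨n + m, by omega, by push_cast; linarith⟩

theorem zlt_le {a b : ℚ} (h1 : zlt a b) : zle a b := by
  obtain ⟨n, hn, e⟩ := h1
  exact ⟨n, by omega, e⟩

theorem zlt_lt {a b : ℚ} (h1 : zlt a b) : a < b := by
  obtain ⟨n, hn, e⟩ := h1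
  have : (0 : ℚ) < n := by exact_mod_cast hn
  linarith

theorem zlt_tr {a b c : ℚ} (h1 : zlt a b) (h2 : zle b c) : zlt a c := by
  obtain ⟨n, hn, e⟩ := h1
  obtain ⟨m, hm, f⟩ := h2
  exact ⟨n + m, by omega, by push_cast; linarith⟩

theorem zle_refl (a : ℚ) : zle a a := ⟨0, le_refl _, by simp⟩

theorem small_of {N : ℕ} {u t : ℚ × ℚ} (h1 : zle t.1 u.2)
    (h2 : zle t.2 (((N : ℚ) + 1) + u.1)) : Small N u t := by
  obtain ⟨n, hn, e⟩ := h1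
  obtain ⟨m, hm, f⟩ := h2
  unfold Small spar supp ldual
  dsimp only
  rcases abs_cases (t.2 - t.1 - (u.1 + ((N : ℚ) + 1) - u.2)) with ⟨h, _⟩ | ⟨h, _⟩
  · exact ⟨2 * m, by omega, by rw [h]; push_cast; linarith⟩
  · exact ⟨2 * n, by omega, by rw [h]; push_cast; linarith⟩

theorem not_small_left {N : ℕ} {u t : ℚ × ℚ} (h1 : u.2 < t.1) : ¬ Small N u t := by
  rintro ⟨n, hn, e⟩
  unfold spar supp ldual at e
  dsimp only at e
  have : (0 : ℚ) ≤ n := by exact_mod_cast hn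
  have := neg_abs_le (t.2 - t.1 - (u.1 + ((N : ℚ) + 1) - u.2))
  linarith

theorem not_small_right {N : ℕ} {u t : ℚ × ℚ} (h1 : ((N : ℚ) + 1) + u.1 < t.2) :
    ¬ Small N u t := by
  rintro ⟨n, hn, e⟩
  unfold spar supp ldual at e
  dsimp only at e
  have : (0 : ℚ) ≤ n := by exact_mod_cast hn
  have := le_abs_self (t.2 - t.1 - (u.1 + ((N : ℚ) + 1) - u.2))
  linarith

theorem zlt_spar {N : ℕ} {u t : ℚ × ℚ} (h1 : zlt u.2 t.1)
    (h2 : zlt (((N : ℚ) + 1) + u.1) t.2) :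
    zlt (spar (ldual N u) - |supp t - supp (ldual N u)|) (spar t) := by
  obtain ⟨n, hn, e⟩ := h1
  obtain ⟨m, hm, f⟩ := h2
  unfold spar supp ldual
  dsimp only
  rcases abs_cases (t.2 - t.1 - (u.1 + ((N : ℚ) + 1) - u.2)) with ⟨h, _⟩ | ⟨h, _⟩
  · exact ⟨2 * m, by omega, by rw [h]; push_cast; linarith⟩
  · exact ⟨2 * n, by omega, by rw [h]; push_cast; linarith⟩

/-- For ladders `𝐬 ▷₁ 𝐬'` of length `l ≥ 2`: the segments `s₁ ∩ s'₁`, `s₁ ∪ s'₁`,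
`s₁ ∩ s'₂`, `s₁ ∪ s'₂` are small; and if moreover `j'₁ < i₂` and `j₂ − i'₁ > h`,
then `s_l` is not small (indeed `spar(s_l) > spar(*s'₁) − |supp(s_l) − supp(*s'₁)|`)
and none of the segments `s_r ∩ s'_t`, `s_r ∪ s'_t` (for `2 ≤ r ≤ l`, `t ∈ {r, r+1}`,
`t ≤ l`) is small. -/
theorem small_analysis (N : ℕ) (hN : 1 ≤ N) (l : ℕ) (hl : 2 ≤ l)
    (s s' : ℕ → ℚ × ℚ) (hs : IsLadder N l s) (hs' : IsLadder N l s')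
    (hcov : CoversP N l 1 s s') :
    (Small N (s' 0) (seginter (s' 0) (s 0)) ∧
     Small N (s' 0) (segunion (s' 0) (s 0)) ∧
     Small N (s' 0) (seginter (s' 1) (s 0)) ∧
     Small N (s' 0) (segunion (s' 1) (s 0))) ∧
    ((zlt (s' 0).2 (s 1).1 ∧ zlt (((N : ℚ) + 1) + (s' 0).1) (s 1).2) →
      (¬ Small N (s' 0) (s (l - 1)) ∧
       zlt (spar (ldual N (s' 0)) - |supp (s (l - 1)) - supp (ldual N (s' 0))|)
         (spar (s (l - 1))) ∧
       ∀ r, 1 ≤ r → r < l →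
         ((¬ Small N (s' 0) (seginter (s' r) (s r)) ∧
           ¬ Small N (s' 0) (segunion (s' r) (s r))) ∧
          (r + 1 < l →
            ¬ Small N (s' 0) (seginter (s' (r + 1)) (s r)) ∧
            ¬ Small N (s' 0) (segunion (s' (r + 1)) (s r)))))) := by
  obtain ⟨a1, a2, a3, a4⟩ := hcov 0 (by omega) 0 (by omega)
  obtain ⟨b1, b2, b3, b4⟩ := hcov 1 le_rfl 0 (by omega)
  simp only [Nat.zero_add] at a1 a2 a3 a4 b1 b2 b3 b4
  refine ⟨⟨small_of a2 (zle_tr (zlt_le a3) a4), small_of (zle_tr (zlt_le a1) a2) a4,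
    small_of a2 (zle_tr (zlt_le b3) a4), small_of (zle_tr (zlt_le b1) a2) a4⟩, ?_⟩
  rintro ⟨c1, c2⟩
  have key : ∀ r, 1 ≤ r → r < l →
      zlt (s' 0).2 (s r).1 ∧ zlt (((N : ℚ) + 1) + (s' 0).1) (s r).2 := by
    intro r h1 hr
    rcases Nat.eq_or_lt_of_le h1 with h | h
    · subst h
      exact ⟨c1, c2⟩
    · obtain ⟨d1, d2⟩ := hs.2 1 r h hr
      exact ⟨zlt_tr c1 (zlt_le d1), zlt_tr c2 (zlt_le d2)⟩
  obtain ⟨k1, k2⟩ := key (l - 1) (by omega) (by omega)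
  refine ⟨not_small_left (zlt_lt k1), zlt_spar k1 k2, ?_⟩
  intro r h1 hr
  obtain ⟨e1, e2⟩ := key r h1 hr
  exact ⟨⟨not_small_left (zlt_lt e1), not_small_right (zlt_lt e2)⟩, fun _ =>
    ⟨not_small_left (zlt_lt e1), not_small_right (zlt_lt e2)⟩⟩


end SnakePaper
end
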